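/- arXiv:2401.05729 — 8 statements merged into one kernel-verified Lean document; each statement's English description precedes it below -/
import Mathlib

section
/- Let T : ℝ⁶ → ℝ⁶ be the linear isomorphism T(x₁,x₂,x₃,y₁,y₂,y₃) = ((x₂+y₂)/2, (y₂−x₂)/2, x₁, x₃, y₁, −y₃). Then for all μ ∈ ℝ∖{0}, t,s ∈ ℝ∖{0} and u,v ∈ ℝ: (i) T∘(ρ(μI₂)⊕ρ(μI₂))∘T⁻¹ = μ²·I₆; (ii) T∘(ρ(diag(t,t⁻¹))⊕ρ(diag(s,s⁻¹)))∘T⁻¹ = diag(1,1,t²,t⁻²,s²,s⁻²); (iii) T∘(ρ(n_u)⊕ρ(n_v))∘T⁻¹ is the 6×6 matrix with rows (1,0,u,0,v,0), (0,1,−u,0,v,0), (0,0,1,0,0,0), (u,−u,u²,1,0,0), (0,0,0,0,1,0), (−v,−v,0,0,−v²,1). Moreover, each of these three matrices M satisfies Mᵀ J₃ M = λ J₃, where J₃ is the 6×6 block-diagonal matrix with three 2×2 blocks [[0,1],[1,0]], with λ = μ⁴ in case (i) and λ = 1 in cases (ii) and (iii). -/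
open Matrix

noncomputable section

/-- Action of the lower-triangular matrix `[[a,0],[c,d]]` on coefficients of binary
quadratic forms. -/
def rho (a c d : ℝ) : Matrix (Fin 3) (Fin 3) ℝ :=
  !![a^2, 0, 0; 2*a*c, a*d, 0; c^2, c*d, d^2]

/-- Direct sum of two `3×3` matrices as a `6×6` matrix. -/
def DS (A B : Matrix (Fin 3) (Fin 3) ℝ) : Matrix (Fin 6) (Fin 6) ℝ :=
  Matrix.reindex finSumFinEquiv finSumFinEquiv (Matrix.fromBlocks A 0 0 B)

/-- The change-of-coordinates `T(x₁,x₂,x₃,y₁,y₂,y₃) = ((x₂+y₂)/2, (y₂−x₂)/2, x₁, x₃, y₁, −y₃)`. -/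
def Tmat : Matrix (Fin 6) (Fin 6) ℝ :=
  !![0, 1/2, 0, 0, 1/2, 0;
     0, -(1/2), 0, 0, 1/2, 0;
     1, 0, 0, 0, 0, 0;
     0, 0, 1, 0, 0, 0;
     0, 0, 0, 1, 0, 0;
     0, 0, 0, 0, 0, -1]

/-- `J₃`: block diagonal with three blocks `[[0,1],[1,0]]`. -/
def J3mat : Matrix (Fin 6) (Fin 6) ℝ :=
  !![0,1,0,0,0,0;
     1,0,0,0,0,0;
     0,0,0,1,0,0;
     0,0,1,0,0,0;
     0,0,0,0,0,1;
     0,0,0,0,1,0]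

/-- The conjugated unipotent matrix. -/
def Muv (u v : ℝ) : Matrix (Fin 6) (Fin 6) ℝ :=
  !![1,0,u,0,v,0;
     0,1,-u,0,v,0;
     0,0,1,0,0,0;
     u,-u,u^2,1,0,0;
     0,0,0,0,1,0;
     -v,-v,0,0,-(v^2),1]

/-!
The substitution `ρ(g)` multiplies the discriminant `disc x = x₂² - 4 x₁ x₃` of a binary quadratic
form by `(det g)²`. In the coordinates `z = T (x, y)` the form `zᵀ J₃ z` becomes
`(disc y - disc x) / 2`. Hence, whenever `det g₁ = det g₂ = δ`, the conjugate of `ρ(g₁) ⊕ ρ(g₂)`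
by `T` is a similitude of `J₃` with multiplier `δ²`; the three families have `δ = μ²`, `1` and `1`.
-/

theorem mul_mul_inv_eq_of_mul_eq_mul {n R : Type*} [Fintype n] [DecidableEq n] [CommRing R]
    {P A B : Matrix n n R} (hP : IsUnit P.det) (h : P * A = B * P) : P * A * P⁻¹ = B := by
  rw [h, mul_nonsing_inv_cancel_right _ _ hP]

section Similitude

variable {m n R : Type*} [Fintype m] [Fintype n] [CommRing R]

/-- The matrix `A` is a similitude, with multiplier `c`, of the bilinear form with Gram matrix
`J`. -/
def IsSimilitude (J : Matrix n n R) (c : R) (A : Matrix n n R) : Prop :=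
  Aᵀ * J * A = c • J

namespace IsSimilitude

theorem smul_form {J A : Matrix n n R} {c : R} (h : IsSimilitude J c A) (k : R) :
    IsSimilitude (k • J) c A := by
  unfold IsSimilitude at h ⊢
  rw [Matrix.mul_smul, Matrix.smul_mul, h, smul_comm]

theorem fromBlocks {F A : Matrix m m R} {G B : Matrix n n R} {c : R}
    (hA : IsSimilitude F c A) (hB : IsSimilitude G c B) :
    IsSimilitude (Matrix.fromBlocks F 0 0 G) c (Matrix.fromBlocks A 0 0 B) := by
  unfold IsSimilitude at hA hB ⊢
  simp [fromBlocks_transpose, fromBlocks_multiply, fromBlocks_smul, hA, hB]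

theorem reindex {J A : Matrix m m R} {c : R} (h : IsSimilitude J c A) (e : m ≃ n) :
    IsSimilitude (Matrix.reindex e e J) c (Matrix.reindex e e A) := by
  unfold IsSimilitude at h ⊢
  simp only [reindex_apply, transpose_submatrix, submatrix_mul_equiv, h, submatrix_smul,
    Pi.smul_apply]

theorem conj [DecidableEq n] {J A P : Matrix n n R} {c : R} (hP : IsUnit P.det)
    (h : IsSimilitude (Pᵀ * J * P) c A) : IsSimilitude J c (P * A * P⁻¹) := by
  have hP' : (P⁻¹)ᵀ * Pᵀ = 1 := by rw [← transpose_mul, mul_nonsing_inv _ hP, transpose_one]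
  calc (P * A * P⁻¹)ᵀ * J * (P * A * P⁻¹)
      = (P⁻¹)ᵀ * (Aᵀ * (Pᵀ * J * P) * A) * P⁻¹ := by
        simp only [transpose_mul, Matrix.mul_assoc]
    _ = c • ((P⁻¹)ᵀ * Pᵀ * J * (P * P⁻¹)) := by
        rw [h, Matrix.mul_smul, Matrix.smul_mul]
        simp only [Matrix.mul_assoc]
    _ = c • J := by rw [hP', mul_nonsing_inv _ hP, Matrix.one_mul, Matrix.mul_one]

end IsSimilitude

end Similitude

theorem IsSimilitude.DS {F G A B : Matrix (Fin 3) (Fin 3) ℝ} {c : ℝ}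
    (hA : IsSimilitude F c A) (hB : IsSimilitude G c B) :
    IsSimilitude (DS F G) c (DS A B) :=
  (hA.fromBlocks hB).reindex finSumFinEquiv

/-- The Gram matrix of the discriminant `x₂² - 4 x₁ x₃` of the binary quadratic form
`x₁ u² + x₂ u v + x₃ v²`, whose similitudes include every `rho a c d`. -/
def discrGram : Matrix (Fin 3) (Fin 3) ℝ :=
  !![0, 0, -2; 0, 1, 0; -2, 0, 0]

theorem isSimilitude_rho (a c d : ℝ) : IsSimilitude discrGram ((a * d) ^ 2) (rho a c d) := by
  unfold IsSimilitude
  ext i j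
  fin_cases i <;> fin_cases j <;>
    simp [rho, discrGram, mul_apply, Fin.sum_univ_three] <;> ring

theorem DS_of (a b c d e f g h i a' b' c' d' e' f' g' h' i' : ℝ) :
    DS !![a, b, c; d, e, f; g, h, i] !![a', b', c'; d', e', f'; g', h', i'] =
      !![a, b, c, 0, 0, 0;
         d, e, f, 0, 0, 0;
         g, h, i, 0, 0, 0;
         0, 0, 0, a', b', c';
         0, 0, 0, d', e', f';
         0, 0, 0, g', h', i'] := by
  ext i j
  fin_cases i <;> fin_cases j <;> rfl

theorem isUnit_det_Tmat : IsUnit Tmat.det := by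
  refine isUnit_det_of_right_inverse (B :=
    !![0, 0, 1, 0, 0, 0;
       1, -1, 0, 0, 0, 0;
       0, 0, 0, 1, 0, 0;
       0, 0, 0, 0, 1, 0;
       1, 1, 0, 0, 0, 0;
       0, 0, 0, 0, 0, -1]) ?_
  ext i j
  fin_cases i <;> fin_cases j <;> norm_num [Tmat, mul_apply, Fin.sum_univ_succ]

theorem transpose_Tmat_mul_J3mat_mul_Tmat :
    Tmatᵀ * J3mat * Tmat = DS ((-1 / 2 : ℝ) • discrGram) ((1 / 2 : ℝ) • discrGram) := by
  simp only [discrGram, smul_of, smul_cons, smul_empty, DS_of]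
  ext i j
  fin_cases i <;> fin_cases j <;> norm_num [Tmat, J3mat, mul_apply, Fin.sum_univ_succ]

theorem isSimilitude_Tmat_conj_DS_rho {a c d a' c' d' δ : ℝ} (h : a * d = δ) (h' : a' * d' = δ) :
    IsSimilitude J3mat (δ ^ 2) (Tmat * DS (rho a c d) (rho a' c' d') * Tmat⁻¹) := by
  have hρ : IsSimilitude discrGram (δ ^ 2) (rho a c d) := h ▸ isSimilitude_rho a c d
  have hρ' : IsSimilitude discrGram (δ ^ 2) (rho a' c' d') := h' ▸ isSimilitude_rho a' c' d'
  refine IsSimilitude.conj isUnit_det_Tmat ?_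
  rw [transpose_Tmat_mul_J3mat_mul_Tmat]
  exact (hρ.smul_form _).DS (hρ'.smul_form _)

theorem Tmat_conj_DS_rho (a c d a' c' d' : ℝ) :
    Tmat * DS (rho a c d) (rho a' c' d') * Tmat⁻¹ =
      !![(a * d + a' * d') / 2, (a' * d' - a * d) / 2, a * c, 0, a' * c', 0;
         (a' * d' - a * d) / 2, (a * d + a' * d') / 2, -(a * c), 0, a' * c', 0;
         0, 0, a ^ 2, 0, 0, 0;
         c * d, -(c * d), c ^ 2, d ^ 2, 0, 0;
         0, 0, 0, 0, a' ^ 2, 0;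
         -(c' * d'), -(c' * d'), 0, 0, -c' ^ 2, d' ^ 2] := by
  apply mul_mul_inv_eq_of_mul_eq_mul isUnit_det_Tmat
  simp only [rho, DS_of]
  ext i j
  fin_cases i <;> fin_cases j <;> simp [Tmat, mul_apply, Fin.sum_univ_succ] <;> ring

theorem Tmat_conj_DS_rho_scalar (μ : ℝ) :
    Tmat * DS (rho μ 0 μ) (rho μ 0 μ) * Tmat⁻¹ = μ ^ 2 • (1 : Matrix (Fin 6) (Fin 6) ℝ) := by
  rw [Tmat_conj_DS_rho]
  ext i j
  fin_cases i <;> fin_cases j <;> simp [pow_two]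

theorem Tmat_conj_DS_rho_diagonal {t s : ℝ} (ht : t ≠ 0) (hs : s ≠ 0) :
    Tmat * DS (rho t 0 t⁻¹) (rho s 0 s⁻¹) * Tmat⁻¹ =
      diagonal ![1, 1, t ^ 2, (t ^ 2)⁻¹, s ^ 2, (s ^ 2)⁻¹] := by
  rw [Tmat_conj_DS_rho]
  ext i j
  fin_cases i <;> fin_cases j <;> simp [ht, hs]

theorem Tmat_conj_DS_rho_unipotent (u v : ℝ) :
    Tmat * DS (rho 1 u 1) (rho 1 v 1) * Tmat⁻¹ = Muv u v := by
  simp [Tmat_conj_DS_rho, Muv]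

theorem stmt0 (μ t s : ℝ) (hμ : μ ≠ 0) (ht : t ≠ 0) (hs : s ≠ 0) (u v : ℝ) :
    Tmat * DS (rho μ 0 μ) (rho μ 0 μ) * Tmat⁻¹ = (μ^2) • (1 : Matrix (Fin 6) (Fin 6) ℝ) ∧
    Tmat * DS (rho t 0 t⁻¹) (rho s 0 s⁻¹) * Tmat⁻¹ =
      Matrix.diagonal ![1, 1, t^2, (t^2)⁻¹, s^2, (s^2)⁻¹] ∧
    Tmat * DS (rho 1 u 1) (rho 1 v 1) * Tmat⁻¹ = Muv u v ∧
    ((μ^2) • (1 : Matrix (Fin 6) (Fin 6) ℝ))ᵀ * J3mat * ((μ^2) • (1 : Matrix (Fin 6) (Fin 6) ℝ))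
      = (μ^4) • J3mat ∧
    (Matrix.diagonal ![1, 1, t^2, (t^2)⁻¹, s^2, (s^2)⁻¹])ᵀ * J3mat *
      Matrix.diagonal ![1, 1, t^2, (t^2)⁻¹, s^2, (s^2)⁻¹] = J3mat ∧
    (Muv u v)ᵀ * J3mat * (Muv u v) = J3mat := by
  have scalar := Tmat_conj_DS_rho_scalar μ
  have diag := Tmat_conj_DS_rho_diagonal ht hs
  have unip := Tmat_conj_DS_rho_unipotent u v
  refine ⟨scalar, diag, unip, ?_, ?_, ?_⟩
  · rw [← scalar]
    exact (isSimilitude_Tmat_conj_DS_rho (sq μ).symm (sq μ).symm).trans (by rw [← pow_mul])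
  · rw [← diag]
    exact (isSimilitude_Tmat_conj_DS_rho (mul_inv_cancel₀ ht) (mul_inv_cancel₀ hs)).trans
      (by rw [one_pow, one_smul])
  · rw [← unip]
    exact (isSimilitude_Tmat_conj_DS_rho (mul_one 1) (mul_one 1)).trans (by rw [one_pow, one_smul])
end
end

section
/- Let n ≥ 1, let J be an invertible real symmetric n×n matrix, and set Q(x) = (1/2)xᵀJx. For x ∈ ℝⁿ let u(x) ∈ GL_{n+2}(ℝ) be the map (ξ, a, b) ↦ (ξ + a·Jx, a, −xᵀξ − Q(x)a + b). Then for every Schwartz function f on ℝⁿ×ℝ×ℝ and all (ξ,ξ₁,ξ₂), one has σ(u(x))f(ξ,ξ₁,ξ₂) = f(ξ + ξ₁·Jx, ξ₁, ξ₂) · e^{2πi ξ₂ (xᵀξ + Q(x)ξ₁)}. In particular (σ(u(x))f)(ξ,0,0) = f(ξ,0,0). -/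
open MeasureTheory Matrix

noncomputable section

/-- The additive character `e(x) = e^{2πix}`. -/
def e (x : ℝ) : ℂ := Complex.exp (2 * Real.pi * Complex.I * x)

/-- The partial Fourier transform `F₂` in the last variable:
`F₂f(ξ,u₁,u₂) = ∫ f(ξ,u₁,x) e^{2πi u₂ x} dx`. -/
def F2 {n : ℕ} (f : (Fin n → ℝ) × ℝ × ℝ → ℂ) : (Fin n → ℝ) × ℝ × ℝ → ℂ :=
  fun p => ∫ x : ℝ, f (p.1, p.2.1, x) * e (p.2.2 * x)

/-- The inverse partial Fourier transform:
`F₂⁻¹f(ξ,u₁,x) = ∫ f(ξ,u₁,u₂) e^{−2πi u₂ x} du₂`. -/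
def F2inv {n : ℕ} (f : (Fin n → ℝ) × ℝ × ℝ → ℂ) : (Fin n → ℝ) × ℝ × ℝ → ℂ :=
  fun p => ∫ u₂ : ℝ, f (p.1, p.2.1, u₂) * e (-(u₂ * p.2.2))

/-- `σ(g) = F₂ ∘ R(g) ∘ F₂⁻¹`, where `g` acts on `ℝⁿ×ℝ×ℝ` by the map `G`. -/
def sigmaOp {n : ℕ} (G : (Fin n → ℝ) × ℝ × ℝ → (Fin n → ℝ) × ℝ × ℝ)
    (f : (Fin n → ℝ) × ℝ × ℝ → ℂ) : (Fin n → ℝ) × ℝ × ℝ → ℂ :=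
  F2 (fun v => F2inv f (G v))

/-! On each line `{(ξ, ξ₁)} × ℝ` the map `u(x)` is a translation of the last coordinate onto another
such line. So on that line `σ(u(x))` takes the Fourier transform of the slice of `f` over the image
line, translates it, and transforms back: translation becomes multiplication by a character, and
Fourier inversion returns the slice itself. -/

open scoped FourierTransform RealInnerProductSpace SchwartzMap

section FourierInversion

variable {V E : Type*} [NormedAddCommGroup V] [InnerProductSpace ℝ V] [MeasurableSpace V]
  [BorelSpace V] [FiniteDimensional ℝ V] [NormedAddCommGroup E] [NormedSpace ℂ E]

/-- The functions to which pointwise Fourier inversion applies: continuous and integrable, with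
integrable Fourier transform. -/
structure IsFourierInvertible (g : V → E) : Prop where
  continuous : Continuous g
  integrable : Integrable g
  integrable_fourier : Integrable (𝓕 g)

theorem IsFourierInvertible.fourierInv_fourier_eq [CompleteSpace E] {g : V → E}
    (hg : IsFourierInvertible g) : 𝓕⁻ (𝓕 g) = g :=
  hg.continuous.fourierInv_fourier_eq hg.integrable hg.integrable_fourier

theorem isFourierInvertible_schwartzMap (g : 𝓢(V, E)) : IsFourierInvertible g where
  continuous := g.continuous
  integrable := g.integrable
  integrable_fourier := (𝓕 g).integrable

theorem fourierInv_comp_sub_right (h : V → E) (c u : V) :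
    𝓕⁻ (fun w => h (w - c)) u = 𝐞 ⟪c, u⟫ • 𝓕⁻ h u := by
  calc 𝓕⁻ (fun w => h (w - c)) u
      = ∫ w, 𝐞 ⟪w, u⟫ • h (w - c) := Real.fourierInv_eq _ _
    _ = ∫ w, 𝐞 ⟪w + c, u⟫ • h w := by
        rw [← integral_add_right_eq_self _ c]
        simp only [add_sub_cancel_right]
    _ = ∫ w, 𝐞 ⟪c, u⟫ • 𝐞 ⟪w, u⟫ • h w := by
        simp only [inner_add_left, add_comm _ ⟪c, u⟫, AddChar.map_add_eq_mul, mul_smul]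
    _ = 𝐞 ⟪c, u⟫ • 𝓕⁻ h u := by
        simp only [Real.fourierInv_eq, Circle.smul_def, integral_smul]

end FourierInversion

section Slice

variable {E F : Type*} [NormedAddCommGroup E] [NormedSpace ℝ E] [NormedAddCommGroup F]
  [NormedSpace ℝ F]

theorem hasTemperateGrowth_prodMk_left (a : E) : (Prod.mk a : F → E × F).HasTemperateGrowth := by
  have h := (Function.HasTemperateGrowth.const (E := F) ((a, 0) : E × F)).add
    (ContinuousLinearMap.inr ℝ E F).hasTemperateGrowth
  convert h using 1
  ext b <;> simp

theorem isometry_prodMk_left {α β : Type*} [PseudoEMetricSpace α] [PseudoEMetricSpace β]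
    (a : α) : Isometry (Prod.mk a : β → α × β) := fun s t => by
  simp [Prod.edist_eq]

/-- The restriction `b ↦ f (a, b)` of a Schwartz function to a slice of a product, as a Schwartz
function. -/
def schwartzSlice {G : Type*} [NormedAddCommGroup G] [NormedSpace ℝ G] (f : 𝓢(E × F, G)) (a : E) :
    𝓢(F, G) :=
  SchwartzMap.compCLMOfAntilipschitz ℝ (hasTemperateGrowth_prodMk_left a)
    (isometry_prodMk_left a).antilipschitz f

theorem isFourierInvertible_schwartzMap_slice {V G : Type*} [NormedAddCommGroup V]
    [InnerProductSpace ℝ V] [MeasurableSpace V] [BorelSpace V] [FiniteDimensional ℝ V]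
    [NormedAddCommGroup G] [NormedSpace ℂ G] (f : 𝓢(E × F × V, G)) (a : E) (b : F) :
    IsFourierInvertible fun v => f (a, b, v) :=
  isFourierInvertible_schwartzMap (schwartzSlice (schwartzSlice f a) b)

end Slice

section PartialFourier

variable {n : ℕ}

theorem e_eq_fourierChar (x : ℝ) : e x = 𝐞 x := by
  rw [e, Real.fourierChar_apply]
  push_cast
  ring_nf

theorem F2inv_eq_fourier (f : (Fin n → ℝ) × ℝ × ℝ → ℂ) (ξ : Fin n → ℝ) (a w : ℝ) :
    F2inv f (ξ, a, w) = 𝓕 (fun t => f (ξ, a, t)) w := by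
  simp only [F2inv, Real.fourier_real_eq, e_eq_fourierChar, Circle.smul_def, smul_eq_mul, mul_comm]

theorem F2_eq_fourierInv (f : (Fin n → ℝ) × ℝ × ℝ → ℂ) (ξ : Fin n → ℝ) (a u : ℝ) :
    F2 f (ξ, a, u) = 𝓕⁻ (fun t => f (ξ, a, t)) u := by
  simp [F2, Real.fourierInv_eq, e_eq_fourierChar, Circle.smul_def, mul_comm]

theorem sigmaOp_apply_of_translation {f : (Fin n → ℝ) × ℝ × ℝ → ℂ}
    {G : (Fin n → ℝ) × ℝ × ℝ → (Fin n → ℝ) × ℝ × ℝ} {ξ η : Fin n → ℝ} {ξ₁ η₁ c : ℝ}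
    (hG : ∀ t, G (ξ, ξ₁, t) = (η, η₁, t - c))
    (hf : IsFourierInvertible fun t => f (η, η₁, t)) (ξ₂ : ℝ) :
    sigmaOp G f (ξ, ξ₁, ξ₂) = f (η, η₁, ξ₂) * e (ξ₂ * c) := by
  calc sigmaOp G f (ξ, ξ₁, ξ₂)
      = 𝓕⁻ (fun t => 𝓕 (fun s => f (η, η₁, s)) (t - c)) ξ₂ := by
        simp only [sigmaOp, F2_eq_fourierInv, hG, F2inv_eq_fourier]
    _ = 𝐞 ⟪c, ξ₂⟫ • f (η, η₁, ξ₂) := by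
        rw [fourierInv_comp_sub_right, hf.fourierInv_fourier_eq]
    _ = f (η, η₁, ξ₂) * e (ξ₂ * c) := by
        rw [e_eq_fourierChar, Circle.smul_def, smul_eq_mul, mul_comm, Real.inner_apply, mul_comm c]

end PartialFourier

theorem stmt2_general {n : ℕ} (x y : Fin n → ℝ) (q : ℝ) {f : (Fin n → ℝ) × ℝ × ℝ → ℂ}
    {ξ : Fin n → ℝ} {ξ₁ : ℝ} (hf : IsFourierInvertible fun t => f (ξ + ξ₁ • y, ξ₁, t)) (ξ₂ : ℝ) :
    sigmaOp (fun p => (p.1 + p.2.1 • y, p.2.1, -(x ⬝ᵥ p.1) - q * p.2.1 + p.2.2)) f (ξ, ξ₁, ξ₂)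
      = f (ξ + ξ₁ • y, ξ₁, ξ₂) * e (ξ₂ * (x ⬝ᵥ ξ + q * ξ₁)) :=
  sigmaOp_apply_of_translation (fun t => by congr 2; ring) hf ξ₂

theorem stmt2 (n : ℕ) (hn : 1 ≤ n) (J : Matrix (Fin n) (Fin n) ℝ)
    (hJsym : J.IsSymm) (hJ : IsUnit J.det) (x : Fin n → ℝ)
    (f : SchwartzMap ((Fin n → ℝ) × ℝ × ℝ) ℂ) (ξ : Fin n → ℝ) (ξ₁ ξ₂ : ℝ) :
    sigmaOp (fun p => (p.1 + p.2.1 • J.mulVec x, p.2.1,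
        -(x ⬝ᵥ p.1) - (1/2 * (x ⬝ᵥ J.mulVec x)) * p.2.1 + p.2.2)) (⇑f) (ξ, ξ₁, ξ₂)
      = f (ξ + ξ₁ • J.mulVec x, ξ₁, ξ₂)
          * e (ξ₂ * (x ⬝ᵥ ξ + (1/2 * (x ⬝ᵥ J.mulVec x)) * ξ₁)) ∧
    sigmaOp (fun p => (p.1 + p.2.1 • J.mulVec x, p.2.1,
        -(x ⬝ᵥ p.1) - (1/2 * (x ⬝ᵥ J.mulVec x)) * p.2.1 + p.2.2)) (⇑f) (ξ, 0, 0)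
      = f (ξ, 0, 0) := by
  have main (a b : ℝ) := stmt2_general x (J.mulVec x) (1 / 2 * (x ⬝ᵥ J.mulVec x))
    (isFourierInvertible_schwartzMap_slice f (ξ + a • J.mulVec x) a) b
  exact ⟨main ξ₁ ξ₂, by simpa [e] using main 0 0⟩
end
end

section
/- Let d and m be positive integers with d dividing m, and let D be an integer with d² dividing D. Then A(4m/d, D/d²) ≤ A(4m, D). -/
/-- `A m n` is the number of residue classes `x` modulo `m` with `x² ≡ n (mod m)`. -/
noncomputable def A (m : ℕ) (n : ℤ) : ℕ := Nat.card {x : ZMod m // x ^ 2 = (n : ZMod m)}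

/-- Multiplication by `d`, as the homomorphism `ℤ/mℤ → ℤ/dmℤ` sending the class of `z` to the
class of `d * z`; it carries square roots of `n` to square roots of `d² * n`. -/
def scaleHom (d m : ℕ) : ZMod m →+ ZMod (d * m) :=
  ZMod.lift m ⟨(AddMonoidHom.mulLeft (d : ZMod (d * m))).comp (Int.castAddHom (ZMod (d * m))), by
    simp [← Nat.cast_mul]⟩

section ScaleHom

variable {d m : ℕ}

theorem scaleHom_intCast (z : ℤ) : scaleHom d m (z : ZMod m) = d * z := by
  simp [scaleHom]

theorem scaleHom_injective (hd : d ≠ 0) : Function.Injective (scaleHom d m) := by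
  refine (injective_iff_map_eq_zero _).2 fun x hx ↦ ?_
  obtain ⟨z, rfl⟩ := ZMod.intCast_surjective x
  rw [scaleHom_intCast, ← Int.cast_natCast, ← Int.cast_mul, ZMod.intCast_zmod_eq_zero_iff_dvd,
    Nat.cast_mul, Int.mul_dvd_mul_iff_left (Nat.cast_ne_zero.2 hd)] at hx
  exact (ZMod.intCast_zmod_eq_zero_iff_dvd z m).2 hx

theorem scaleHom_mul_scaleHom (x y : ZMod m) :
    scaleHom d m x * scaleHom d m y = d * scaleHom d m (x * y) := by
  obtain ⟨a, rfl⟩ := ZMod.intCast_surjective x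
  obtain ⟨b, rfl⟩ := ZMod.intCast_surjective y
  rw [← Int.cast_mul, scaleHom_intCast, scaleHom_intCast, scaleHom_intCast, Int.cast_mul]
  ring

theorem scaleHom_sq_of_sq_eq {x : ZMod m} {n : ℤ} (hx : x ^ 2 = n) :
    scaleHom d m x ^ 2 = ((d ^ 2 * n : ℤ) : ZMod (d * m)) :=
  calc
    scaleHom d m x ^ 2 = d * scaleHom d m (x ^ 2) := by rw [sq, sq, scaleHom_mul_scaleHom]
    _ = d * (d * n) := by rw [hx, scaleHom_intCast]
    _ = ((d ^ 2 * n : ℤ) : ZMod (d * m)) := by push_cast; ring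

end ScaleHom

theorem A_le_A_mul {d m : ℕ} (hd : d ≠ 0) (hm : m ≠ 0) (n : ℤ) :
    A m n ≤ A (d * m) (d ^ 2 * n) := by
  have : NeZero (d * m) := ⟨mul_ne_zero hd hm⟩
  exact Nat.card_le_card_of_injective
    (Subtype.map (scaleHom d m) fun _ hx ↦ scaleHom_sq_of_sq_eq hx)
    (Subtype.map_injective _ (scaleHom_injective hd))

theorem stmt8_general {d m : ℕ} (hm : m ≠ 0) (hdm : d ∣ m) {D : ℤ} (hdD : (d : ℤ) ^ 2 ∣ D) :
    A (m / d) (D / (d : ℤ) ^ 2) ≤ A m D := by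
  have hd : d ≠ 0 := ne_zero_of_dvd_ne_zero hm hdm
  have hmd : m / d ≠ 0 := (Nat.div_ne_zero_iff_of_dvd hdm).2 ⟨hm, hd⟩
  have h := A_le_A_mul hd hmd (D / (d : ℤ) ^ 2)
  rwa [Nat.mul_div_cancel' hdm, Int.mul_ediv_cancel' hdD] at h

theorem stmt8 (d m : ℕ) (hd : 0 < d) (hm : 0 < m) (hdm : d ∣ m) (D : ℤ)
    (hdD : (d : ℤ) ^ 2 ∣ D) :
    A (4 * m / d) (D / (d : ℤ) ^ 2) ≤ A (4 * m) D :=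
  stmt8_general (by positivity) (hdm.mul_left 4) hdD
end

section
/- Let σ₁, σ₂, σ₃ be real numbers with σ₁ > 1, σ₂ > 1 and σ₃ > 3, and let ε ∈ {+1, −1}. Then the triple series ∑_{D=1}^{∞} ∑_{m=1}^{∞} ∑_{n=1}^{∞} ( ∑_{d ≥ 1, d²∣D, d∣m, d∣n} d · A(4m/d, εD/d²) · A(4n/d, εD/d²) ) / ( m^{σ₁} n^{σ₂} D^{σ₃} ) converges; that is, the multiple Dirichlet series ξ₊(s₁,s₂,w) and ξ₋(s₁,s₂,w) converge absolutely in the region Re(s₁) > 1, Re(s₂) > 1, Re(w) > 3. -/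
/-!
If `x₀² ≡ n (mod m)`, then any other root `x` satisfies `m ∣ (x - x₀) (x + x₀)`, so `m = e f` with
`x ≡ x₀ (mod e)` and `x ≡ -x₀ (mod f)`. For given `e` and `f` these two congruences have at most
`gcd(e, f)` common solutions modulo `m`. Hence `A m n ≤ G m := ∑_{e f = m} gcd(e, f)`, uniformly in
`n`. The Dirichlet series of `G` converges for `σ > 1`: writing `e = g a`, `f = g b` with
`g = gcd(e, f)`, it is dominated by `∑_{g, a, b} g ^ (1 - 2 σ) a ^ (-σ) b ^ (-σ)`. Since `G` is
monotone for divisibility and `∑_{d² ∣ D} d ≤ G D`, the inner sum over `d` is at most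
`G D · G (4 m) · G (4 n)`, which separates the three variables.
-/

open Finset

/-- The sum of `gcd(e, f)` over all factorizations `n = e f`, which bounds the number of square
roots of any residue modulo `n`. The value at `0` is `0`. -/
def gcdSum (n : ℕ) : ℕ := ∑ p ∈ n.divisorsAntidiagonal, p.1.gcd p.2

lemma gcdSum_eq_sum_divisors (n : ℕ) : gcdSum n = ∑ d ∈ n.divisors, d.gcd (n / d) :=
  Nat.sum_divisorsAntidiagonal Nat.gcd

lemma gcdSum_le_of_dvd {m n : ℕ} (hn : n ≠ 0) (hmn : m ∣ n) : gcdSum m ≤ gcdSum n := by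
  simp only [gcdSum_eq_sum_divisors]
  calc ∑ d ∈ m.divisors, d.gcd (m / d)
      ≤ ∑ d ∈ m.divisors, d.gcd (n / d) := sum_le_sum fun d hd ↦
        Nat.le_of_dvd (Nat.gcd_pos_of_pos_left _ (Nat.pos_of_mem_divisors hd))
          (Nat.gcd_dvd_gcd_of_dvd_right d (Nat.div_dvd_div (Nat.dvd_of_mem_divisors hd) hmn))
    _ ≤ ∑ d ∈ n.divisors, d.gcd (n / d) :=
        sum_le_sum_of_subset (Nat.divisors_subset_of_dvd hn hmn)

lemma sum_sq_dvd_le_gcdSum (n : ℕ) : ∑ d ∈ n.divisors with d ^ 2 ∣ n, d ≤ gcdSum n := by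
  rw [gcdSum_eq_sum_divisors]
  calc ∑ d ∈ n.divisors with d ^ 2 ∣ n, d
      = ∑ d ∈ n.divisors with d ^ 2 ∣ n, d.gcd (n / d) := sum_congr rfl fun d hd ↦
        (Nat.gcd_eq_left (Nat.dvd_div_of_mul_dvd (sq d ▸ (mem_filter.1 hd).2))).symm
    _ ≤ ∑ d ∈ n.divisors, d.gcd (n / d) := sum_le_sum_of_subset (filter_subset _ _)

lemma card_filter_range_natCast_eq_le_gcd (e f : ℕ) (a : ZMod e) (b : ZMod f) :
    #{x ∈ range (e * f) | ((x : ℕ) : ZMod e) = a ∧ ((x : ℕ) : ZMod f) = b} ≤ e.gcd f := by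
  rcases Finset.eq_empty_or_nonempty
    {x ∈ range (e * f) | ((x : ℕ) : ZMod e) = a ∧ ((x : ℕ) : ZMod f) = b} with h | ⟨y, hy⟩
  · simp [h]
  obtain ⟨hyM, rfl, rfl⟩ := mem_filter.1 hy
  have hlcm : 0 < e.lcm f :=
    Nat.lcm_pos (Nat.pos_of_ne_zero fun h ↦ by simp [h] at hyM)
      (Nat.pos_of_ne_zero fun h ↦ by simp [h] at hyM)
  calc #{x ∈ range (e * f) | ((x : ℕ) : ZMod e) = y ∧ ((x : ℕ) : ZMod f) = y}
      ≤ #{x ∈ range (e * f) | x ≡ y [MOD e.lcm f]} := by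
        gcongr with x
        rintro ⟨he, hf⟩
        rw [ZMod.natCast_eq_natCast_iff, ← Int.natCast_modEq_iff] at he hf
        rw [← Int.natCast_modEq_iff]
        exact Int.modEq_and_modEq_iff_modEq_lcm.1 ⟨he, hf⟩
    _ = e.gcd f := by
        rw [← Nat.count_eq_card_filter_range, Nat.count_modEq_card _ hlcm, ← Nat.gcd_mul_lcm e f,
          Nat.mul_div_cancel _ hlcm, Nat.mul_mod_left, if_neg (Nat.not_lt_zero _), add_zero]

lemma A_eq_card_filter_range {m : ℕ} (hm : m ≠ 0) (n : ℤ) :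
    A m n = #{x ∈ range m | ((x : ℕ) : ZMod m) ^ 2 = n} := by
  have : NeZero m := ⟨hm⟩
  rw [A, Nat.card_eq_fintype_card, Fintype.card_subtype]
  refine card_nbij' ZMod.val (fun x ↦ (x : ZMod m)) ?_ ?_ ?_ ?_
  · intro x hx
    simpa [ZMod.val_lt] using hx
  · intro x hx
    simpa using (mem_filter.1 hx).2
  · intro x _
    simp
  · intro x hx
    exact ZMod.val_cast_of_lt (mem_range.1 (mem_filter.1 hx).1)

lemma exists_mem_divisorsAntidiagonal_of_sq_eq_sq {m : ℕ} (hm : m ≠ 0) {x y : ℕ}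
    (h : (x : ZMod m) ^ 2 = (y : ZMod m) ^ 2) :
    ∃ p ∈ m.divisorsAntidiagonal, (x : ZMod p.1) = y ∧ (x : ZMod p.2) = -y := by
  have hdvd : (m : ℤ) ∣ (x - y) * (x + y) := by
    rw [← ZMod.intCast_zmod_eq_zero_iff_dvd]
    push_cast
    linear_combination h
  rw [Int.natCast_dvd, Int.natAbs_mul] at hdvd
  obtain ⟨e, f, he, hf, hef⟩ := Nat.dvd_mul.1 hdvd
  refine ⟨(e, f), Nat.mem_divisorsAntidiagonal.2 ⟨hef, hm⟩, ?_, ?_⟩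
  · rw [← Int.natCast_dvd, ← ZMod.intCast_zmod_eq_zero_iff_dvd] at he
    push_cast at he
    exact sub_eq_zero.1 he
  · rw [← Int.natCast_dvd, ← ZMod.intCast_zmod_eq_zero_iff_dvd] at hf
    push_cast at hf
    exact eq_neg_of_add_eq_zero_left hf

lemma A_le_gcdSum {m : ℕ} (hm : m ≠ 0) (n : ℤ) : A m n ≤ gcdSum m := by
  rw [A_eq_card_filter_range hm]
  rcases Finset.eq_empty_or_nonempty {x ∈ range m | ((x : ℕ) : ZMod m) ^ 2 = n} with h | ⟨y, hy⟩
  · simp [h]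
  have hyn : (y : ZMod m) ^ 2 = n := (mem_filter.1 hy).2
  let solutions (p : ℕ × ℕ) : Finset ℕ :=
    {x ∈ range (p.1 * p.2) | ((x : ℕ) : ZMod p.1) = y ∧ ((x : ℕ) : ZMod p.2) = -y}
  have hcover : {x ∈ range m | ((x : ℕ) : ZMod m) ^ 2 = n} ⊆
      m.divisorsAntidiagonal.biUnion solutions := by
    intro x hx
    obtain ⟨hxm, hxn⟩ := mem_filter.1 hx
    obtain ⟨p, hp, hxy⟩ := exists_mem_divisorsAntidiagonal_of_sq_eq_sq hm (hxn.trans hyn.symm)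
    refine mem_biUnion.2 ⟨p, hp, mem_filter.2 ⟨?_, hxy⟩⟩
    rwa [(Nat.mem_divisorsAntidiagonal.1 hp).1]
  calc #{x ∈ range m | ((x : ℕ) : ZMod m) ^ 2 = n}
      ≤ #(m.divisorsAntidiagonal.biUnion solutions) := card_le_card hcover
    _ ≤ ∑ p ∈ m.divisorsAntidiagonal, #(solutions p) := card_biUnion_le
    _ ≤ gcdSum m := sum_le_sum fun p _ ↦ card_filter_range_natCast_eq_le_gcd p.1 p.2 _ _

lemma A_div_le_gcdSum {m d : ℕ} (hm : m ≠ 0) (hd : d ∣ m) (n : ℤ) : A (m / d) n ≤ gcdSum m :=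
  (A_le_gcdSum (Nat.div_ne_zero_iff_of_dvd hd |>.2 ⟨hm, ne_zero_of_dvd_ne_zero hm hd⟩) n).trans
    (gcdSum_le_of_dvd hm (Nat.div_dvd_of_dvd hd))

lemma sum_mul_A_mul_A_le {k D m n : ℕ} (hk : k ≠ 0) (hD : D ≠ 0) (hm : m ≠ 0) (hn : n ≠ 0)
    (N : ℕ → ℤ) :
    ∑ d ∈ m.divisors with d ^ 2 ∣ D ∧ d ∣ n, d * A (k * m / d) (N d) * A (k * n / d) (N d) ≤
      gcdSum D * gcdSum (k * m) * gcdSum (k * n) := by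
  calc ∑ d ∈ m.divisors with d ^ 2 ∣ D ∧ d ∣ n, d * A (k * m / d) (N d) * A (k * n / d) (N d)
      ≤ ∑ d ∈ m.divisors with d ^ 2 ∣ D ∧ d ∣ n, d * gcdSum (k * m) * gcdSum (k * n) := by
        refine sum_le_sum fun d hd ↦ ?_
        obtain ⟨hdm, -, hdn⟩ := mem_filter.1 hd
        gcongr
        · exact A_div_le_gcdSum (by positivity) ((Nat.dvd_of_mem_divisors hdm).mul_left k) _
        · exact A_div_le_gcdSum (by positivity) (hdn.mul_left k) _
    _ = (∑ d ∈ m.divisors with d ^ 2 ∣ D ∧ d ∣ n, d) * gcdSum (k * m) * gcdSum (k * n) := by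
        simp only [sum_mul]
    _ ≤ (∑ d ∈ D.divisors with d ^ 2 ∣ D, d) * gcdSum (k * m) * gcdSum (k * n) := by
        gcongr
        intro d hd
        have hdD : d ^ 2 ∣ D := (mem_filter.1 hd).2.1
        exact mem_filter.2 ⟨Nat.mem_divisors.2 ⟨(dvd_pow_self d two_ne_zero).trans hdD, hD⟩, hdD⟩
    _ ≤ gcdSum D * gcdSum (k * m) * gcdSum (k * n) := by
        gcongr
        exact sum_sq_dvd_le_gcdSum D

section Summability

variable {σ : ℝ}

lemma summable_gcd_div_rpow_mul_rpow (hσ : 1 < σ) :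
    Summable fun p : ℕ × ℕ ↦ (p.1.gcd p.2 : ℝ) / ((p.1 : ℝ) ^ σ * (p.2 : ℝ) ^ σ) := by
  have hζ : Summable fun n : ℕ ↦ 1 / (n : ℝ) ^ σ := Real.summable_one_div_nat_rpow.2 hσ
  have hg : Summable fun g : ℕ ↦ (g : ℝ) / ((g : ℝ) ^ σ * (g : ℝ) ^ σ) := by
    refine (Real.summable_one_div_nat_rpow.2 (show 1 < σ + σ - 1 by linarith)).congr fun g ↦ ?_
    rcases g.eq_zero_or_pos with rfl | hg
    · simp [Real.zero_rpow (show σ + σ - 1 ≠ 0 by linarith)]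
    · have hg' : (0 : ℝ) < g := by exact_mod_cast hg
      rw [Real.rpow_sub_one hg'.ne', Real.rpow_add hg', one_div_div]
  have hproduct := hg.mul_of_nonneg
    (hζ.mul_of_nonneg hζ (fun _ ↦ by positivity) (fun _ ↦ by positivity))
    (fun _ ↦ by positivity) (fun _ ↦ by positivity)
  have hinj : Function.Injective fun p : ℕ × ℕ ↦
      (p.1.gcd p.2, p.1 / p.1.gcd p.2, p.2 / p.1.gcd p.2) := by
    refine Function.LeftInverse.injective (g := fun q ↦ (q.1 * q.2.1, q.1 * q.2.2)) fun p ↦ ?_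
    exact Prod.ext (Nat.mul_div_cancel' (Nat.gcd_dvd_left _ _))
      (Nat.mul_div_cancel' (Nat.gcd_dvd_right _ _))
  refine (hproduct.comp_injective hinj).congr fun ⟨e, f⟩ ↦ ?_
  have hsplit {n : ℕ} (hn : e.gcd f ∣ n) :
      (n : ℝ) ^ σ = (e.gcd f : ℝ) ^ σ * ((n / e.gcd f : ℕ) : ℝ) ^ σ := by
    rw [← Real.mul_rpow (by positivity) (by positivity), ← Nat.cast_mul, Nat.mul_div_cancel' hn]
  simp only [Function.comp_apply]
  rw [hsplit (Nat.gcd_dvd_left e f), hsplit (Nat.gcd_dvd_right e f)]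
  ring

lemma summable_gcdSum_div_rpow (hσ : 1 < σ) :
    Summable fun n : ℕ ↦ (gcdSum n : ℝ) / (n : ℝ) ^ σ := by
  refine ((summable_gcd_div_rpow_mul_rpow hσ).hasSum.tsum_fiberwise
    fun p ↦ p.1 * p.2).summable.congr_cofinite ?_
  filter_upwards [(Set.finite_singleton 0).compl_mem_cofinite] with n hn
  have hfiber : (fun p : ℕ × ℕ ↦ p.1 * p.2) ⁻¹' {n} = n.divisorsAntidiagonal := by
    ext p
    simpa using fun _ ↦ hn
  rw [hfiber, Finset.tsum_subtype' n.divisorsAntidiagonal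
    fun p ↦ (p.1.gcd p.2 : ℝ) / ((p.1 : ℝ) ^ σ * (p.2 : ℝ) ^ σ), gcdSum, Nat.cast_sum, sum_div]
  refine sum_congr rfl fun p hp ↦ ?_
  rw [← Real.mul_rpow (by positivity) (by positivity), ← Nat.cast_mul,
    (Nat.mem_divisorsAntidiagonal.1 hp).1]

lemma summable_gcdSum_mul_succ_div_rpow (hσ : 1 < σ) {k : ℕ} (hk : k ≠ 0) :
    Summable fun n : ℕ ↦ (gcdSum (k * (n + 1)) : ℝ) / ((n : ℝ) + 1) ^ σ := by
  have hinj : Function.Injective fun n : ℕ ↦ k * (n + 1) :=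
    (mul_right_injective₀ hk).comp (add_left_injective 1)
  refine (((summable_gcdSum_div_rpow hσ).comp_injective hinj).mul_left ((k : ℝ) ^ σ)).congr
    fun n ↦ ?_
  have hk' : (k : ℝ) ^ σ ≠ 0 := by positivity
  simp only [Function.comp_apply]
  push_cast
  rw [Real.mul_rpow (by positivity) (by positivity)]
  field_simp

end Summability

theorem stmt11_general (σ₁ σ₂ σ₃ : ℝ) (h1 : 1 < σ₁) (h2 : 1 < σ₂) (h3 : 1 < σ₃) (ε : ℤ) :
    Summable (fun p : ℕ × ℕ × ℕ =>
      (∑ d ∈ (p.2.1 + 1).divisors.filter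
            (fun d : ℕ => (d : ℤ) ^ 2 ∣ ((p.1 : ℤ) + 1) ∧ d ∣ (p.2.2 + 1)),
          (d : ℝ) * (A (4 * (p.2.1 + 1) / d) (ε * ((p.1 : ℤ) + 1) / (d : ℤ) ^ 2) : ℝ)
            * (A (4 * (p.2.2 + 1) / d) (ε * ((p.1 : ℤ) + 1) / (d : ℤ) ^ 2) : ℝ)) /
        (((p.2.1 : ℝ) + 1) ^ σ₁ * ((p.2.2 : ℝ) + 1) ^ σ₂ * ((p.1 : ℝ) + 1) ^ σ₃)) := by
  have hm := summable_gcdSum_mul_succ_div_rpow h1 four_ne_zero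
  have hn := summable_gcdSum_mul_succ_div_rpow h2 four_ne_zero
  have hD := summable_gcdSum_mul_succ_div_rpow h3 one_ne_zero
  have hproduct := hD.mul_of_nonneg
    (hm.mul_of_nonneg hn (fun _ ↦ by positivity) (fun _ ↦ by positivity))
    (fun _ ↦ by positivity) (fun _ ↦ by positivity)
  refine hproduct.of_nonneg_of_le (fun p ↦ by positivity) fun ⟨D, m, n⟩ ↦ ?_
  have hinner := sum_mul_A_mul_A_le four_ne_zero D.succ_ne_zero m.succ_ne_zero n.succ_ne_zero
    fun d ↦ ε * ((D : ℤ) + 1) / (d : ℤ) ^ 2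
  rw [div_mul_div_comm, div_mul_div_comm, one_mul, ← mul_assoc, mul_comm ((D + 1 : ℝ) ^ σ₃)]
  gcongr
  exact_mod_cast hinner

theorem stmt11 (σ₁ σ₂ σ₃ : ℝ) (h1 : 1 < σ₁) (h2 : 1 < σ₂) (h3 : 3 < σ₃)
    (ε : ℤ) (hε : ε = 1 ∨ ε = -1) :
    Summable (fun p : ℕ × ℕ × ℕ =>
      (∑ d ∈ (p.2.1 + 1).divisors.filter
            (fun d : ℕ => (d : ℤ) ^ 2 ∣ ((p.1 : ℤ) + 1) ∧ d ∣ (p.2.2 + 1)),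
          (d : ℝ) * (A (4 * (p.2.1 + 1) / d) (ε * ((p.1 : ℤ) + 1) / (d : ℤ) ^ 2) : ℝ)
            * (A (4 * (p.2.2 + 1) / d) (ε * ((p.1 : ℤ) + 1) / (d : ℤ) ^ 2) : ℝ)) /
        (((p.2.1 : ℝ) + 1) ^ σ₁ * ((p.2.2 : ℝ) + 1) ^ σ₂ * ((p.1 : ℝ) + 1) ^ σ₃)) :=
  stmt11_general σ₁ σ₂ σ₃ h1 h2 (by linarith) ε
end

section
/- Let (m,b,c,n,b',c') ∈ ℝ⁶ with m > 0, n > 0 and b² − 4mc = b'² − 4nc' =: D. (i) If D > 0, then there exist unique μ, t, s ∈ (0,∞) and u, v ∈ ℝ such that m = μ²t², b = 2μ²u, c = μ²t⁻²(u²−1), n = μ²s², b' = 2μ²v, c' = μ²s⁻²(v²−1); necessarily 4μ⁴ = D, μ²t² = m and μ²s² = n. (ii) If D < 0, then there exist unique μ, t, s ∈ (0,∞) and u, v ∈ ℝ such that m = μ²t², b = 2μ²u, c = μ²t⁻²(u²+1), n = μ²s², b' = 2μ²v, c' = μ²s⁻²(v²+1); necessarily 4μ⁴ = −D. Consequently the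 orbit maps h ↦ h·x₊ and h ↦ h·x₋ are bijections from B⁺ onto {(x,y) : x₁ > 0, y₁ > 0, P(x,y) > 0} and {(x,y) : x₁ > 0, y₁ > 0, P(x,y) < 0} respectively, and the stabilizers of x₊ and x₋ in B⁺ are trivial. -/
noncomputable section

/-- Action of the lower-triangular matrix `[[a,0],[c,d]]` on the coefficients
`(x₁,x₂,x₃)` of the binary quadratic form `x₁u² + x₂uv + x₃v²`. -/
def rhoAct (a c d : ℝ) (x : ℝ × ℝ × ℝ) : ℝ × ℝ × ℝ :=
  (a ^ 2 * x.1, 2 * a * c * x.1 + a * d * x.2.1,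
    c ^ 2 * x.1 + c * d * x.2.1 + d ^ 2 * x.2.2)

/-- Parameters `(μ, t, s, u, v)` of the group `B⁺`. -/
abbrev Param : Type := ℝ × ℝ × ℝ × ℝ × ℝ

/-- The space `ℝ³ × ℝ³` of pairs of binary quadratic forms. -/
abbrev Vsp : Type := (ℝ × ℝ × ℝ) × (ℝ × ℝ × ℝ)

/-- The action of `h = (μ,t,s,u,v)` on pairs of binary quadratic forms, via
`g₁ = μ·[[t,0],[u/t,1/t]]` and `g₂ = μ·[[s,0],[v/s,1/s]]`. -/
def act (p : Param) (q : Vsp) : Vsp :=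
  (rhoAct (p.1 * p.2.1) (p.1 * p.2.2.2.1 / p.2.1) (p.1 / p.2.1) q.1,
   rhoAct (p.1 * p.2.2.1) (p.1 * p.2.2.2.2 / p.2.2.1) (p.1 / p.2.2.1) q.2)

/-- The parameter set `B⁺`: `μ, t, s > 0`. -/
def Bplus : Set Param := {p | 0 < p.1 ∧ 0 < p.2.1 ∧ 0 < p.2.2.1}

/-- Discriminant of a binary quadratic form. -/
def disc (x : ℝ × ℝ × ℝ) : ℝ := x.2.1 ^ 2 - 4 * x.1 * x.2.2

/-- The base point `x₊`. -/
def xplus : Vsp := ((1, 0, -1), (1, 0, -1))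

/-- The base point `x₋`. -/
def xminus : Vsp := ((1, 0, 1), (1, 0, 1))

/-- The coordinate equations of case (i) (`D > 0`), with positivity of `μ, t, s`. -/
def eqsPos (m b c n b' c' : ℝ) (p : Param) : Prop :=
  (0 < p.1 ∧ 0 < p.2.1 ∧ 0 < p.2.2.1) ∧
  m = p.1 ^ 2 * p.2.1 ^ 2 ∧ b = 2 * p.1 ^ 2 * p.2.2.2.1 ∧
  c = p.1 ^ 2 * (p.2.1 ^ 2)⁻¹ * (p.2.2.2.1 ^ 2 - 1) ∧
  n = p.1 ^ 2 * p.2.2.1 ^ 2 ∧ b' = 2 * p.1 ^ 2 * p.2.2.2.2 ∧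
  c' = p.1 ^ 2 * (p.2.2.1 ^ 2)⁻¹ * (p.2.2.2.2 ^ 2 - 1)

/-- The coordinate equations of case (ii) (`D < 0`), with positivity of `μ, t, s`. -/
def eqsNeg (m b c n b' c' : ℝ) (p : Param) : Prop :=
  (0 < p.1 ∧ 0 < p.2.1 ∧ 0 < p.2.2.1) ∧
  m = p.1 ^ 2 * p.2.1 ^ 2 ∧ b = 2 * p.1 ^ 2 * p.2.2.2.1 ∧
  c = p.1 ^ 2 * (p.2.1 ^ 2)⁻¹ * (p.2.2.2.1 ^ 2 + 1) ∧
  n = p.1 ^ 2 * p.2.2.1 ^ 2 ∧ b' = 2 * p.1 ^ 2 * p.2.2.2.2 ∧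
  c' = p.1 ^ 2 * (p.2.2.1 ^ 2)⁻¹ * (p.2.2.2.2 ^ 2 + 1)

/-!
A form with nonzero leading coefficient is determined by its first two coefficients and its
discriminant. An element `(μ, t, s, u, v)` of `B⁺` multiplies both discriminants by `μ⁴`, so on the
orbit of a base point the common discriminant determines `μ`; the first two coefficients of the two
forms then determine `(t, u)` and `(s, v)`, and the third coefficients agree automatically.
Both signs of the discriminant are treated at once through the base forms `u² - ε v²`.
-/

theorem existsUnique_of_bijOn {α β : Type*} {f : α → β} {s : Set α} {t : Set β}
    (hf : Set.BijOn f s t) {y : β} (hy : y ∈ t) : ∃! x, x ∈ s ∧ f x = y := by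
  obtain ⟨x, hx, rfl⟩ := hf.surjOn hy
  exact ⟨x, ⟨hx, rfl⟩, fun z hz => hf.injOn hz.1 hx hz.2⟩

theorem disc_rhoAct (a c d : ℝ) (x : ℝ × ℝ × ℝ) :
    disc (rhoAct a c d x) = (a * d) ^ 2 * disc x := by
  simp only [disc, rhoAct]
  ring

theorem eq_of_disc_eq {x y : ℝ × ℝ × ℝ} (hx : x.1 ≠ 0) (h₁ : x.1 = y.1) (h₂ : x.2.1 = y.2.1)
    (hdisc : disc x = disc y) : x = y := by
  have h₃ : 4 * x.1 * x.2.2 = 4 * x.1 * y.2.2 := by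
    simpa only [disc, ← h₁, ← h₂, sub_right_inj] using hdisc
  exact Prod.ext h₁ (Prod.ext h₂ (mul_left_cancel₀ (by simpa using hx) h₃))

theorem disc_rhoAct_mul_div (μ u : ℝ) {t : ℝ} (ht : t ≠ 0) (x : ℝ × ℝ × ℝ) :
    disc (rhoAct (μ * t) (μ * u / t) (μ / t) x) = μ ^ 4 * disc x := by
  rw [disc_rhoAct]
  field_simp

theorem one_act (q : Vsp) : act (1, 1, 1, 0, 0) q = q := by
  simp [act, rhoAct]

/-- The binary quadratic form `u² - ε v²`; the components of `xplus` and `xminus` are its cases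
`ε = 1` and `ε = -1`. -/
def baseForm (ε : ℝ) : ℝ × ℝ × ℝ := (1, 0, -ε)

/-- The base point of `ℝ³ × ℝ³` both of whose components are `u² - ε v²`. -/
def basePair (ε : ℝ) : Vsp := (baseForm ε, baseForm ε)

theorem xplus_eq_basePair : xplus = basePair 1 := rfl

theorem xminus_eq_basePair : xminus = basePair (-1) := by
  simp only [xminus, basePair, baseForm, neg_neg]

theorem disc_baseForm (ε : ℝ) : disc (baseForm ε) = 4 * ε := by
  simp [disc, baseForm]

theorem rhoAct_baseForm (ε μ u : ℝ) {t : ℝ} (ht : t ≠ 0) :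
    rhoAct (μ * t) (μ * u / t) (μ / t) (baseForm ε) =
      (μ ^ 2 * t ^ 2, 2 * μ ^ 2 * u, μ ^ 2 * (t ^ 2)⁻¹ * (u ^ 2 - ε)) := by
  simp only [rhoAct, baseForm, Prod.mk.injEq]
  refine ⟨?_, ?_, ?_⟩ <;> field_simp <;> ring

theorem act_basePair {p : Param} (hp : p ∈ Bplus) (ε : ℝ) :
    act p (basePair ε) =
      ((p.1 ^ 2 * p.2.1 ^ 2, 2 * p.1 ^ 2 * p.2.2.2.1,
          p.1 ^ 2 * (p.2.1 ^ 2)⁻¹ * (p.2.2.2.1 ^ 2 - ε)),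
        (p.1 ^ 2 * p.2.2.1 ^ 2, 2 * p.1 ^ 2 * p.2.2.2.2,
          p.1 ^ 2 * (p.2.2.1 ^ 2)⁻¹ * (p.2.2.2.2 ^ 2 - ε))) := by
  simp only [act, basePair, rhoAct_baseForm _ _ _ hp.2.1.ne', rhoAct_baseForm _ _ _ hp.2.2.ne']

theorem disc_rhoAct_baseForm (ε μ u : ℝ) {t : ℝ} (ht : t ≠ 0) :
    disc (rhoAct (μ * t) (μ * u / t) (μ / t) (baseForm ε)) = 4 * μ ^ 4 * ε := by
  rw [disc_rhoAct_mul_div μ u ht, disc_baseForm]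
  ring

theorem rhoAct_baseForm_eq {ε μ : ℝ} (hμ : 0 < μ) {x : ℝ × ℝ × ℝ} (hx : 0 < x.1)
    (hdisc : disc x = 4 * μ ^ 4 * ε) :
    rhoAct (μ * (√x.1 / μ)) (μ * (x.2.1 / (2 * μ ^ 2)) / (√x.1 / μ)) (μ / (√x.1 / μ))
      (baseForm ε) = x := by
  have ht : √x.1 / μ ≠ 0 := (div_pos (Real.sqrt_pos.2 hx) hμ).ne'
  refine (eq_of_disc_eq hx.ne' ?_ ?_ ?_).symm
  · rw [rhoAct_baseForm ε μ _ ht, ← mul_pow, mul_div_cancel₀ _ hμ.ne', Real.sq_sqrt hx.le]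
  · rw [rhoAct_baseForm ε μ _ ht, mul_div_cancel₀ _ (by positivity)]
  · rw [disc_rhoAct_baseForm ε μ _ ht, hdisc]

theorem disc_act_basePair_fst {p : Param} (hp : p ∈ Bplus) (ε : ℝ) :
    disc (act p (basePair ε)).1 = 4 * p.1 ^ 4 * ε :=
  disc_rhoAct_baseForm ε p.1 _ hp.2.1.ne'

theorem disc_act_basePair_snd {p : Param} (hp : p ∈ Bplus) (ε : ℝ) :
    disc (act p (basePair ε)).2 = 4 * p.1 ^ 4 * ε :=
  disc_rhoAct_baseForm ε p.1 _ hp.2.2.ne'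

theorem eqsPos_iff {m b c n b' c' : ℝ} {p : Param} :
    eqsPos m b c n b' c' p ↔ p ∈ Bplus ∧ act p xplus = ((m, b, c), (n, b', c')) := by
  refine and_congr_right fun hp => ?_
  simp only [xplus_eq_basePair, act_basePair hp, Prod.mk.injEq, and_assoc, eq_comm]

theorem eqsNeg_iff {m b c n b' c' : ℝ} {p : Param} :
    eqsNeg m b c n b' c' p ↔ p ∈ Bplus ∧ act p xminus = ((m, b, c), (n, b', c')) := by
  refine and_congr_right fun hp => ?_
  simp only [xminus_eq_basePair, act_basePair hp, Prod.mk.injEq, and_assoc, sub_neg_eq_add,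
    eq_comm]

theorem four_mul_pow_eq_of_eqsPos {m b c n b' c' : ℝ} {p : Param}
    (h : eqsPos m b c n b' c' p) : 4 * p.1 ^ 4 = b ^ 2 - 4 * m * c := by
  obtain ⟨hp, hact⟩ := eqsPos_iff.1 h
  have hdisc := disc_act_basePair_fst hp 1
  rw [← xplus_eq_basePair, hact, mul_one] at hdisc
  exact hdisc.symm

theorem four_mul_pow_eq_of_eqsNeg {m b c n b' c' : ℝ} {p : Param}
    (h : eqsNeg m b c n b' c' p) : 4 * p.1 ^ 4 = -(b ^ 2 - 4 * m * c) := by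
  obtain ⟨hp, hact⟩ := eqsNeg_iff.1 h
  have hdisc := disc_act_basePair_fst hp (-1)
  rw [← xminus_eq_basePair, hact, mul_neg_one] at hdisc
  exact (neg_eq_iff_eq_neg.2 hdisc).symm

/-- The pairs of forms with positive leading coefficients and a common discriminant of the same
sign as `ε`; for `ε ≠ 0` this is the `B⁺`-orbit of `basePair ε`. -/
def orbitSet (ε : ℝ) : Set Vsp :=
  {q | disc q.1 = disc q.2 ∧ 0 < q.1.1 ∧ 0 < q.2.1 ∧ 0 < ε * disc q.1}

theorem act_basePair_mem_orbitSet {ε : ℝ} (hε : ε ≠ 0) {p : Param} (hp : p ∈ Bplus) :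
    act p (basePair ε) ∈ orbitSet ε := by
  have ⟨hμ, ht, hs⟩ := hp
  refine ⟨?_, ?_, ?_, ?_⟩
  · rw [disc_act_basePair_fst hp, disc_act_basePair_snd hp]
  · rw [act_basePair hp]; positivity
  · rw [act_basePair hp]; positivity
  · rw [disc_act_basePair_fst hp, show ε * (4 * p.1 ^ 4 * ε) = 4 * p.1 ^ 4 * ε ^ 2 by ring]
    positivity

theorem div_four_mul_pos {ε D : ℝ} (h : 0 < ε * D) : 0 < D / (4 * ε) := by
  have hε : ε ≠ 0 := left_ne_zero_of_mul h.ne'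
  rw [show D / (4 * ε) = ε * D / (4 * ε ^ 2) by field_simp]
  positivity

/-- The scaling parameter `μ` of the element of `B⁺` carrying `baseForm ε` to a form of
discriminant `D`: the positive solution of `4 μ⁴ ε = D`, when `ε` and `D` have the same sign. -/
def orbitScale (ε D : ℝ) : ℝ := √√(D / (4 * ε))

theorem orbitScale_four_mul_pow {ε μ : ℝ} (hε : ε ≠ 0) (hμ : 0 ≤ μ) :
    orbitScale ε (4 * μ ^ 4 * ε) = μ := by
  have h : 4 * μ ^ 4 * ε / (4 * ε) = (μ ^ 2) ^ 2 := by field_simp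
  rw [orbitScale, h, Real.sqrt_sq (sq_nonneg μ), Real.sqrt_sq hμ]

theorem orbitScale_pos {ε D : ℝ} (h : 0 < ε * D) : 0 < orbitScale ε D :=
  Real.sqrt_pos.2 (Real.sqrt_pos.2 (div_four_mul_pos h))

theorem four_mul_orbitScale_pow {ε D : ℝ} (h : 0 < ε * D) : 4 * orbitScale ε D ^ 4 * ε = D := by
  have hε : ε ≠ 0 := left_ne_zero_of_mul h.ne'
  have hpow : orbitScale ε D ^ 4 = D / (4 * ε) := by
    rw [orbitScale, show 4 = 2 * 2 from rfl, pow_mul, Real.sq_sqrt (Real.sqrt_nonneg _),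
      Real.sq_sqrt (div_four_mul_pos h).le]
  rw [hpow]
  field_simp

/-- The element of `B⁺` carrying `basePair ε` to a given point of `orbitSet ε`. -/
def orbitParam (ε : ℝ) (q : Vsp) : Param :=
  let μ := orbitScale ε (disc q.1)
  (μ, √q.1.1 / μ, √q.2.1 / μ, q.1.2.1 / (2 * μ ^ 2), q.2.2.1 / (2 * μ ^ 2))

theorem orbitParam_mem_Bplus {ε : ℝ} {q : Vsp} (hq : q ∈ orbitSet ε) : orbitParam ε q ∈ Bplus :=
  have ⟨_, hm, hn, hD⟩ := hq
  ⟨orbitScale_pos hD, div_pos (Real.sqrt_pos.2 hm) (orbitScale_pos hD),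
    div_pos (Real.sqrt_pos.2 hn) (orbitScale_pos hD)⟩

theorem orbitParam_act_basePair {ε : ℝ} (hε : ε ≠ 0) {p : Param} (hp : p ∈ Bplus) :
    orbitParam ε (act p (basePair ε)) = p := by
  have ⟨hμ, ht, hs⟩ := hp
  have hsqrt {r : ℝ} (hr : 0 < r) : √(p.1 ^ 2 * r ^ 2) / p.1 = r := by
    rw [← mul_pow, Real.sqrt_sq (by positivity), mul_div_cancel_left₀ _ hμ.ne']
  have hlin (w : ℝ) : 2 * p.1 ^ 2 * w / (2 * p.1 ^ 2) = w :=
    mul_div_cancel_left₀ _ (by positivity)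
  simp only [orbitParam, disc_act_basePair_fst hp, orbitScale_four_mul_pow hε hμ.le]
  simp only [act_basePair hp, hsqrt ht, hsqrt hs, hlin]

theorem act_orbitParam_basePair {ε : ℝ} {q : Vsp} (hq : q ∈ orbitSet ε) :
    act (orbitParam ε q) (basePair ε) = q := by
  have ⟨hdisc, hm, hn, hD⟩ := hq
  have hscale : disc q.1 = 4 * orbitScale ε (disc q.1) ^ 4 * ε := (four_mul_orbitScale_pow hD).symm
  exact Prod.ext (rhoAct_baseForm_eq (orbitScale_pos hD) hm hscale)
    (rhoAct_baseForm_eq (orbitScale_pos hD) hn (hdisc.symm.trans hscale))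

theorem bijOn_act_basePair {ε : ℝ} (hε : ε ≠ 0) :
    Set.BijOn (fun p => act p (basePair ε)) Bplus (orbitSet ε) :=
  Set.InvOn.bijOn (f' := orbitParam ε)
    ⟨fun _ => orbitParam_act_basePair hε, fun _ => act_orbitParam_basePair⟩
    (fun _ => act_basePair_mem_orbitSet hε) (fun _ => orbitParam_mem_Bplus)

theorem bijOn_act_xplus :
    Set.BijOn (fun p => act p xplus) Bplus
      {q : Vsp | disc q.1 = disc q.2 ∧ 0 < q.1.1 ∧ 0 < q.2.1 ∧ 0 < disc q.1} := by
  simpa only [orbitSet, one_mul, xplus_eq_basePair] using bijOn_act_basePair one_ne_zero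

theorem bijOn_act_xminus :
    Set.BijOn (fun p => act p xminus) Bplus
      {q : Vsp | disc q.1 = disc q.2 ∧ 0 < q.1.1 ∧ 0 < q.2.1 ∧ disc q.1 < 0} := by
  simpa only [orbitSet, neg_mul, one_mul, neg_pos, xminus_eq_basePair] using
    bijOn_act_basePair (neg_ne_zero.2 one_ne_zero)

theorem eq_one_of_act_eq {q : Vsp} (hq : Set.InjOn (fun p => act p q) Bplus) {p : Param}
    (hp : p ∈ Bplus) (h : act p q = q) : p = (1, 1, 1, 0, 0) :=
  hq hp (by simp [Bplus]) (h.trans (one_act q).symm)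

theorem stmt12 :
    (∀ m b c n b' c' : ℝ, 0 < m → 0 < n →
      b ^ 2 - 4 * m * c = b' ^ 2 - 4 * n * c' →
      ((0 < b ^ 2 - 4 * m * c →
          (∃! p : Param, eqsPos m b c n b' c' p) ∧
          (∀ p : Param, eqsPos m b c n b' c' p →
            4 * p.1 ^ 4 = b ^ 2 - 4 * m * c ∧
            p.1 ^ 2 * p.2.1 ^ 2 = m ∧ p.1 ^ 2 * p.2.2.1 ^ 2 = n)) ∧
       (b ^ 2 - 4 * m * c < 0 →
          (∃! p : Param, eqsNeg m b c n b' c' p) ∧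
          (∀ p : Param, eqsNeg m b c n b' c' p →
            4 * p.1 ^ 4 = -(b ^ 2 - 4 * m * c))))) ∧
    Set.BijOn (fun p => act p xplus) Bplus
      {q : Vsp | disc q.1 = disc q.2 ∧ 0 < q.1.1 ∧ 0 < q.2.1 ∧ 0 < disc q.1} ∧
    Set.BijOn (fun p => act p xminus) Bplus
      {q : Vsp | disc q.1 = disc q.2 ∧ 0 < q.1.1 ∧ 0 < q.2.1 ∧ disc q.1 < 0} ∧
    (∀ p ∈ Bplus, act p xplus = xplus → p = (1, 1, 1, 0, 0)) ∧
    (∀ p ∈ Bplus, act p xminus = xminus → p = (1, 1, 1, 0, 0)) := by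
  refine ⟨fun m b c n b' c' hm hn hD => ?_, bijOn_act_xplus, bijOn_act_xminus,
    fun _ => eq_one_of_act_eq bijOn_act_xplus.injOn,
    fun _ => eq_one_of_act_eq bijOn_act_xminus.injOn⟩
  refine ⟨fun hpos => ⟨?_, fun p hp => ?_⟩, fun hneg => ⟨?_, fun p hp => ?_⟩⟩
  · simpa only [eqsPos_iff] using existsUnique_of_bijOn bijOn_act_xplus
      (y := ((m, b, c), (n, b', c'))) ⟨hD, hm, hn, hpos⟩
  · exact ⟨four_mul_pow_eq_of_eqsPos hp, hp.2.1.symm, hp.2.2.2.2.1.symm⟩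
  · simpa only [eqsNeg_iff] using existsUnique_of_bijOn bijOn_act_xminus
      (y := ((m, b, c), (n, b', c'))) ⟨hD, hm, hn, hneg⟩
  · exact four_mul_pow_eq_of_eqsNeg hp
end
end

section
/- Let a be a real number with a > 1 and let s ∈ ℂ. Then ∫₀^π (a + √(a²−1)·sin 2θ)^{s−1} dθ = ∫₀^π (a + √(a²−1)·sin 2θ)^{−s} dθ, where the complex powers are the principal powers of the (strictly positive) base a + √(a²−1)·sin 2θ. Equivalently, for t > 0 and u > √t/2, the function s ↦ 2^{s−1} t^{−(s−1)/2} ∫₀^π (u + √(u²−t/4)·sin 2θ)^{s−1} dθ is invariant under s ↦ 1−s. -/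
open MeasureTheory

/-!
For `|b| < a`, the involution `x ↦ x' = -(a x + b) / (a + b x)` of `[-1, 1]` is characterised by
`(a + b x) (a + b x') = a² - b²`. Lifted to angles by `x = cos θ`, it reverses `[0, π]` and has
derivative `-√(a² - b²) / (a + b cos θ)`. As a substitution it therefore turns the integral of
`(a + b cos θ) ^ (s - 1)` into `(a² - b²) ^ (s - 1/2)` times that of `(a + b cos θ) ^ (-s)`, and
both claims are cases of this identity: `a² - b² = 1` and `a² - b² = t / 4`.
-/

section Substitution

open Real

variable {a b x θ : ℝ}

lemma add_mul_pos_of_abs_lt (hab : |b| < a) (hx : |x| ≤ 1) : 0 < a + b * x := by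
  have hbx : |b * x| ≤ |b| := by
    rw [abs_mul]
    exact mul_le_of_le_one_right (abs_nonneg b) hx
  linarith [neg_abs_le (b * x)]

lemma sq_sub_sq_pos_of_abs_lt (hab : |b| < a) : 0 < a ^ 2 - b ^ 2 :=
  sub_pos.2 (sq_lt_sq.2 (hab.trans_le (le_abs_self a)))

/-- The involution of `[-1, 1]` (for `|b| < a`) sending `x` to the point `x'` with
`(a + b * x) * (a + b * x') = a ^ 2 - b ^ 2`. The quotient, unlike this equation, also makes sense
for `b = 0`, where the involution is `x ↦ -x`. -/
noncomputable def conjCos (a b x : ℝ) : ℝ := -(a * x + b) / (a + b * x)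

lemma add_mul_conjCos (h : a + b * x ≠ 0) :
    a + b * conjCos a b x = (a ^ 2 - b ^ 2) / (a + b * x) := by
  rw [conjCos]
  field_simp
  ring

lemma one_sub_conjCos_sq (h : a + b * x ≠ 0) :
    1 - conjCos a b x ^ 2 = (a ^ 2 - b ^ 2) * (1 - x ^ 2) / (a + b * x) ^ 2 := by
  rw [conjCos, div_pow, one_sub_div (pow_ne_zero 2 h)]
  ring

lemma hasDerivAt_conjCos (h : a + b * x ≠ 0) :
    HasDerivAt (conjCos a b) (-(a ^ 2 - b ^ 2) / (a + b * x) ^ 2) x := by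
  have hnum : HasDerivAt (fun y => -(a * y + b)) (-a) x :=
    ((hasDerivAt_const_mul a).add_const b).fun_neg
  have hden : HasDerivAt (fun y => a + b * y) b x :=
    (hasDerivAt_const_mul b).const_add a
  refine (hnum.div hden h).congr_deriv ?_
  ring

lemma abs_conjCos_le_one (hab : |b| < a) (hx : |x| ≤ 1) : |conjCos a b x| ≤ 1 := by
  have hsq : 0 ≤ 1 - conjCos a b x ^ 2 := by
    rw [one_sub_conjCos_sq (add_mul_pos_of_abs_lt hab hx).ne']
    have hx2 : 0 ≤ 1 - x ^ 2 := sub_nonneg.2 ((sq_le_one_iff_abs_le_one x).2 hx)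
    have hpos := sq_sub_sq_pos_of_abs_lt hab
    positivity
  exact (sq_le_one_iff_abs_le_one _).1 (sub_nonneg.1 hsq)

/-- The involution `conjCos` of `[-1, 1]` transported to `[0, π]` along the cosine. -/
noncomputable def conjAngle (a b θ : ℝ) : ℝ := arccos (conjCos a b (cos θ))

lemma cos_conjAngle (hab : |b| < a) (θ : ℝ) :
    cos (conjAngle a b θ) = conjCos a b (cos θ) := by
  have h := abs_le.1 (abs_conjCos_le_one hab (abs_cos_le_one θ))
  exact cos_arccos h.1 h.2

lemma sin_conjAngle (hab : |b| < a) (hθ : 0 ≤ sin θ) :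
    sin (conjAngle a b θ) = √(a ^ 2 - b ^ 2) * sin θ / (a + b * cos θ) := by
  have hP := add_mul_pos_of_abs_lt hab (abs_cos_le_one θ)
  rw [conjAngle, sin_arccos, one_sub_conjCos_sq hP.ne', ← sin_sq, sqrt_div' _ (sq_nonneg _),
    sqrt_sq hP.le, sqrt_mul (sq_sub_sq_pos_of_abs_lt hab).le, sqrt_sq hθ]

lemma conjAngle_zero (h : a + b ≠ 0) : conjAngle a b 0 = π := by
  rw [conjAngle, conjCos, cos_zero, mul_one, mul_one, neg_div, div_self h, arccos_neg_one]

lemma conjAngle_pi (h : a - b ≠ 0) : conjAngle a b π = 0 := by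
  have hone : conjCos a b (-1) = 1 := by
    rw [conjCos, div_eq_one_iff_eq] <;> grind
  rw [conjAngle, cos_pi, hone, arccos_one]

lemma continuous_conjAngle (hab : |b| < a) : Continuous (conjAngle a b) := by
  unfold conjAngle conjCos
  exact continuous_arccos.comp <| Continuous.div (by fun_prop) (by fun_prop) fun θ =>
    (add_mul_pos_of_abs_lt hab (abs_cos_le_one θ)).ne'

lemma hasDerivAt_conjAngle (hab : |b| < a) (hθ : 0 < sin θ) :
    HasDerivAt (conjAngle a b) (-(√(a ^ 2 - b ^ 2) / (a + b * cos θ))) θ := by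
  have hP := add_mul_pos_of_abs_lt hab (abs_cos_le_one θ)
  have hδ := sq_sub_sq_pos_of_abs_lt hab
  have hsin : √(1 - conjCos a b (cos θ) ^ 2) = √(a ^ 2 - b ^ 2) * sin θ / (a + b * cos θ) := by
    rw [← sin_conjAngle hab hθ.le, conjAngle, sin_arccos]
  have hsq : 0 < 1 - conjCos a b (cos θ) ^ 2 := sqrt_pos.1 (by rw [hsin]; positivity)
  have harccos := hasDerivAt_arccos (x := conjCos a b (cos θ)) (by grind) (by grind)
  refine (harccos.comp θ ((hasDerivAt_conjCos hP.ne').comp θ (hasDerivAt_cos θ))).congr_deriv ?_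
  rw [hsin]
  field_simp
  rw [sq_sqrt hδ.le]

variable {E : Type*} [NormedAddCommGroup E] [NormedSpace ℝ E]

lemma integral_comp_add_mul_cos (hab : |b| < a) (f : ℝ → E) :
    ∫ θ in (0 : ℝ)..π, f (a + b * cos θ) =
      ∫ θ in (0 : ℝ)..π,
        (√(a ^ 2 - b ^ 2) / (a + b * cos θ)) • f ((a ^ 2 - b ^ 2) / (a + b * cos θ)) := by
  have hP (θ : ℝ) := add_mul_pos_of_abs_lt hab (abs_cos_le_one θ)
  have hsin {θ : ℝ} (hθ : θ ∈ Set.Ioo (min 0 π) (max 0 π)) : 0 < sin θ := by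
    rw [min_eq_left pi_pos.le, max_eq_right pi_pos.le] at hθ
    exact sin_pos_of_mem_Ioo hθ
  have hsubst := intervalIntegral.integral_deriv_smul_comp_of_deriv_nonpos
    (g := fun φ => f (a + b * cos φ)) (continuous_conjAngle hab).continuousOn
    (fun θ hθ => hasDerivAt_conjAngle hab (hsin hθ))
    (fun θ _ => neg_nonpos.2 (div_nonneg (sqrt_nonneg _) (hP θ).le))
  rw [conjAngle_zero (by linarith [neg_abs_le b]), conjAngle_pi (by linarith [le_abs_self b]),
    intervalIntegral.integral_symm 0 π] at hsubst
  simpa only [Function.comp_apply, cos_conjAngle hab, add_mul_conjCos (hP _).ne', neg_smul,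
    intervalIntegral.integral_neg, neg_inj] using hsubst.symm

lemma integral_comp_sin_two_mul {f : ℝ → E}
    (hf : IntervalIntegrable (fun θ => f (cos θ)) volume 0 π) :
    ∫ θ in (0 : ℝ)..π, f (sin (2 * θ)) = ∫ θ in (0 : ℝ)..π, f (cos θ) := by
  have hperiodic : Function.Periodic (fun θ => f (cos θ)) (2 * π) := cos_periodic.comp f
  have heven : ∫ θ in (-π)..0, f (cos θ) = ∫ θ in (0 : ℝ)..π, f (cos θ) := by
    simpa using (intervalIntegral.integral_comp_neg (a := 0) (b := π) fun θ => f (cos θ)).symm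
  have hf' : IntervalIntegrable (fun θ => f (cos θ)) volume (-π) 0 := by
    simpa using ((IntervalIntegrable.iff_comp_neg (by simp)).1 hf).symm
  calc ∫ θ in (0 : ℝ)..π, f (sin (2 * θ))
      = ∫ θ in (0 : ℝ)..π, f (cos (2 * θ - π / 2)) := by simp only [cos_sub_pi_div_two]
    _ = (2 : ℝ)⁻¹ • ∫ θ in (-(π / 2))..(-(π / 2) + 2 * π), f (cos θ) := by
      rw [intervalIntegral.integral_comp_mul_sub (fun θ => f (cos θ)) two_ne_zero]
      congr 2 <;> ring
    _ = (2 : ℝ)⁻¹ • ∫ θ in (-π)..π, f (cos θ) := by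
      rw [hperiodic.intervalIntegral_add_eq _ (-π)]
      congr 2
      ring
    _ = ∫ θ in (0 : ℝ)..π, f (cos θ) := by
      rw [← intervalIntegral.integral_add_adjacent_intervals hf' hf, heven, ← two_smul ℝ,
        inv_smul_smul₀ two_ne_zero]

end Substitution

section Power

open Real

variable {a b c t u : ℝ}

lemma sqrt_div_smul_div_cpow_sub_one {d p : ℝ} (hd : 0 < d) (hp : 0 < p) (s : ℂ) :
    (√d / p) • ((d / p : ℝ) : ℂ) ^ (s - 1) = (d : ℂ) ^ (s - 1 / 2) * (p : ℂ) ^ (-s) := by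
  have hdc : (d : ℂ) ≠ 0 := by exact_mod_cast hd.ne'
  have hpc : (p : ℂ) ≠ 0 := by exact_mod_cast hp.ne'
  have hsqrt : ((√d : ℝ) : ℂ) = (d : ℂ) ^ (1 / 2 : ℂ) := by
    rw [sqrt_eq_rpow, Complex.ofReal_cpow hd.le]
    norm_num
  have hinv (z : ℂ) : ((p⁻¹ : ℝ) : ℂ) ^ z = (p : ℂ) ^ (-z) := by
    rw [Complex.ofReal_inv, Complex.inv_cpow _ _ (by
      simp [Complex.arg_ofReal_of_nonneg hp.le, pi_pos.ne]), Complex.cpow_neg]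
  calc (√d / p) • ((d / p : ℝ) : ℂ) ^ (s - 1)
      = ((d : ℂ) ^ (1 / 2 : ℂ) * (d : ℂ) ^ (s - 1)) *
          ((p : ℂ) ^ (-1 : ℂ) * (p : ℂ) ^ (-(s - 1))) := by
        rw [Complex.real_smul, div_eq_mul_inv, div_eq_mul_inv, Complex.ofReal_mul,
          Complex.ofReal_mul, Complex.mul_cpow_ofReal_nonneg hd.le (inv_pos.2 hp).le, hinv, hsqrt,
          Complex.ofReal_inv, ← Complex.cpow_neg_one]
        ring
    _ = (d : ℂ) ^ (s - 1 / 2) * (p : ℂ) ^ (-s) := by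
        rw [← Complex.cpow_add _ _ hdc, ← Complex.cpow_add _ _ hpc]
        ring_nf

lemma integral_add_mul_cos_cpow_sub_one (hab : |b| < a) (s : ℂ) :
    ∫ θ in (0 : ℝ)..π, ((a + b * cos θ : ℝ) : ℂ) ^ (s - 1) =
      ((a ^ 2 - b ^ 2 : ℝ) : ℂ) ^ (s - 1 / 2) *
        ∫ θ in (0 : ℝ)..π, ((a + b * cos θ : ℝ) : ℂ) ^ (-s) := by
  rw [integral_comp_add_mul_cos hab fun p => (p : ℂ) ^ (s - 1),
    ← intervalIntegral.integral_const_mul]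
  simp only [sqrt_div_smul_div_cpow_sub_one (sq_sub_sq_pos_of_abs_lt hab)
    (add_mul_pos_of_abs_lt hab (abs_cos_le_one _))]

lemma integral_add_mul_sin_two_mul_cpow (hab : |b| < a) (z : ℂ) :
    ∫ θ in (0 : ℝ)..π, ((a + b * sin (2 * θ) : ℝ) : ℂ) ^ z =
      ∫ θ in (0 : ℝ)..π, ((a + b * cos θ : ℝ) : ℂ) ^ z := by
  have hcont : Continuous fun θ : ℝ => ((a + b * cos θ : ℝ) : ℂ) ^ z :=
    Continuous.cpow (by fun_prop) continuous_const fun θ =>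
      Complex.ofReal_mem_slitPlane.2 (add_mul_pos_of_abs_lt hab (abs_cos_le_one θ))
  exact integral_comp_sin_two_mul (f := fun x => ((a + b * x : ℝ) : ℂ) ^ z)
    (hcont.intervalIntegrable 0 π)

lemma abs_sqrt_sq_sub_lt (hc : 0 < c) (hu : 0 < u) : |√(u ^ 2 - c)| < u := by
  rw [abs_of_nonneg (sqrt_nonneg _), sqrt_lt' hu]
  linarith

lemma integral_add_sqrt_mul_sin_two_mul_cpow_sub_one (hc : 0 < c) (hu : √c < u) (s : ℂ) :
    ∫ θ in (0 : ℝ)..π, ((u + √(u ^ 2 - c) * sin (2 * θ) : ℝ) : ℂ) ^ (s - 1) =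
      (c : ℂ) ^ (s - 1 / 2) *
        ∫ θ in (0 : ℝ)..π, ((u + √(u ^ 2 - c) * sin (2 * θ) : ℝ) : ℂ) ^ (-s) := by
  have hu0 : 0 < u := (sqrt_nonneg c).trans_lt hu
  have hab := abs_sqrt_sq_sub_lt hc hu0
  have hcu : c < u ^ 2 := (sqrt_lt' hu0).1 hu
  rw [integral_add_mul_sin_two_mul_cpow hab, integral_add_mul_sin_two_mul_cpow hab,
    integral_add_mul_cos_cpow_sub_one hab, sq_sqrt (sub_pos.2 hcu).le, sub_sub_cancel]

lemma two_cpow_mul_cpow_neg_half (ht : 0 < t) (z : ℂ) :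
    (2 : ℂ) ^ z * (t : ℂ) ^ (-(z / 2)) = ((t / 4 : ℝ) : ℂ) ^ (-(z / 2)) := by
  have hmul : (t : ℂ) ^ (-(z / 2)) =
      (2 : ℂ) ^ (-(z / 2)) * (2 : ℂ) ^ (-(z / 2)) * ((t / 4 : ℝ) : ℂ) ^ (-(z / 2)) := by
    have ht4 : t = 2 * 2 * (t / 4) := by ring
    conv_lhs => rw [ht4, Complex.ofReal_mul (2 * 2)]
    rw [Complex.mul_cpow_ofReal_nonneg (by norm_num) (by positivity),
      Complex.ofReal_mul, Complex.mul_cpow_ofReal_nonneg zero_le_two zero_le_two,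
      Complex.ofReal_ofNat]
  have hcancel : (2 : ℂ) ^ z * ((2 : ℂ) ^ (-(z / 2)) * (2 : ℂ) ^ (-(z / 2))) = 1 := by
    rw [← Complex.cpow_add _ _ two_ne_zero, ← Complex.cpow_add _ _ two_ne_zero]
    ring_nf
    exact Complex.cpow_zero 2
  rw [hmul, ← mul_assoc, hcancel, one_mul]

end Power

theorem stmt17 (a : ℝ) (ha : 1 < a) (s : ℂ) :
    (∫ θ in (0:ℝ)..Real.pi,
        ((a + Real.sqrt (a ^ 2 - 1) * Real.sin (2 * θ) : ℝ) : ℂ) ^ (s - 1))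
      = (∫ θ in (0:ℝ)..Real.pi,
        ((a + Real.sqrt (a ^ 2 - 1) * Real.sin (2 * θ) : ℝ) : ℂ) ^ (-s)) ∧
    (∀ t u : ℝ, 0 < t → Real.sqrt t / 2 < u →
      (2 : ℂ) ^ (s - 1) * ((t : ℝ) : ℂ) ^ (-((s - 1) / 2)) *
          (∫ θ in (0:ℝ)..Real.pi,
            ((u + Real.sqrt (u ^ 2 - t / 4) * Real.sin (2 * θ) : ℝ) : ℂ) ^ (s - 1))
        = (2 : ℂ) ^ ((1 - s) - 1) * ((t : ℝ) : ℂ) ^ (-(((1 - s) - 1) / 2)) *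
          (∫ θ in (0:ℝ)..Real.pi,
            ((u + Real.sqrt (u ^ 2 - t / 4) * Real.sin (2 * θ) : ℝ) : ℂ) ^ ((1 - s) - 1))) := by
  constructor
  · rw [integral_add_sqrt_mul_sin_two_mul_cpow_sub_one one_pos (by simpa using ha),
      Complex.ofReal_one, Complex.one_cpow, one_mul]
  · intro t u ht hu
    have ht4 : 0 < t / 4 := by positivity
    have hsqrt : √(t / 4) = √t / 2 := by
      rw [Real.sqrt_div' t (by norm_num), show (4 : ℝ) = 2 ^ 2 by norm_num,
        Real.sqrt_sq zero_le_two]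
    have hbase : ((t / 4 : ℝ) : ℂ) ≠ 0 := Complex.ofReal_ne_zero.2 ht4.ne'
    rw [two_cpow_mul_cpow_neg_half ht, two_cpow_mul_cpow_neg_half ht,
      integral_add_sqrt_mul_sin_two_mul_cpow_sub_one ht4 (hsqrt.trans_lt hu), ← mul_assoc,
      ← Complex.cpow_add _ _ hbase]
    ring_nf
end

section
/- Let a be a real number and let s ∈ ℂ with 0 < Re(s) < 1. Then both integrals below converge and sin(πs/2) · ∫₀^π |a + √(a²+1)·sin 2θ|^{s−1} dθ = cos(πs/2) · ∫₀^π |a + √(a²+1)·sin 2θ|^{−s} dθ. Equivalently, for t > 0 and u ∈ ℝ, the function s ↦ sin(πs/2) · 2^{s−1} t^{−(s−1)/2} ∫₀^π |u + √(u²+t/4)·sin 2θ|^{s−1} dθ is invariant under s ↦ 1−s on the strip 0 < Re(s) < 1. -/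
open MeasureTheory

/-!
`circleForm a θ = a + √(a² + 1) sin 2θ` is a quadratic form of determinant `-1` restricted to the
unit circle. Evaluating `∫ (x - i q)⁻¹` over `q = circleForm a θ` by Cauchy's formula gives
`∫ x / (x² + q²) = Re (π / √(1 + x² - 2 i a x))`, and as `1 + x² - 2 i a x` is a self-reciprocal
polynomial in `x`, the function `P` of `x` so obtained satisfies `P (1 / x) = x P x`. This turns
the trivial bound `P x ≤ π / x` into `P x ≤ π`, so the Mellin transform of `P` converges on the
strip `0 < Re s < 1`, and it makes that transform invariant under `s ↦ 1 - s`. By Fubini the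
transform equals `π / (2 cos (π s / 2)) · ∫ |q| ^ (s - 1)`, which is the asserted symmetry; the
version in `(t, u)` follows by rescaling `q` by `√t / 2`.
-/

section MellinTransform

lemma sin_pi_mul_ne_zero_of_re_mem_Ioo {s : ℂ} (hs : s.re ∈ Set.Ioo 0 1) :
    Complex.sin (Real.pi * s) ≠ 0 := by
  intro h
  have hΓ := Complex.Gamma_mul_Gamma_one_sub s
  rw [h, div_zero] at hΓ
  refine mul_ne_zero (Complex.Gamma_ne_zero_of_re_pos hs.1)
    (Complex.Gamma_ne_zero_of_re_pos ?_) hΓ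
  simpa using hs.2

lemma re_one_sub_mem_Ioo {s : ℂ} (hs : s.re ∈ Set.Ioo 0 1) : (1 - s).re ∈ Set.Ioo 0 1 := by
  simpa [and_comm] using hs

lemma cos_pi_mul_one_sub_div_two (s : ℂ) :
    Complex.cos (Real.pi * (1 - s) / 2) = Complex.sin (Real.pi * s / 2) := by
  rw [← Complex.cos_pi_div_two_sub]
  congr 1
  ring

lemma sin_pi_mul_add_one_div_two (s : ℂ) :
    Complex.sin (Real.pi * (s + 1) / 2) = Complex.cos (Real.pi * s / 2) := by
  rw [← Complex.sin_add_pi_div_two]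
  congr 1
  ring

lemma cos_pi_mul_div_two_ne_zero_of_re_mem_Ioo {s : ℂ} (hs : s.re ∈ Set.Ioo (-1) 1) :
    Complex.cos (Real.pi * s / 2) ≠ 0 := by
  have hre : ((s + 1) / 2).re ∈ Set.Ioo 0 1 := by
    simp only [Complex.div_ofNat_re, Complex.add_re, Complex.one_re]
    constructor <;> linarith [hs.1, hs.2]
  rw [← sin_pi_mul_add_one_div_two, mul_div_assoc]
  exact sin_pi_mul_ne_zero_of_re_mem_Ioo hre

lemma image_div_one_add_Ioi_zero :
    (fun x : ℝ => x / (1 + x)) '' Set.Ioi 0 = Set.Ioo 0 1 := by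
  ext u
  simp only [Set.mem_image, Set.mem_Ioi, Set.mem_Ioo]
  constructor
  · rintro ⟨x, hx, rfl⟩
    exact ⟨by positivity, (div_lt_one (by positivity)).2 (by linarith)⟩
  · rintro ⟨hu0, hu1⟩
    have : 0 < 1 - u := sub_pos.2 hu1
    exact ⟨u / (1 - u), by positivity, by field_simp; ring⟩

lemma hasDerivAt_div_one_add {x : ℝ} (hx : 1 + x ≠ 0) :
    HasDerivAt (fun x : ℝ => x / (1 + x)) ((1 + x) ^ 2)⁻¹ x := by
  refine ((hasDerivAt_id x).div ((hasDerivAt_id x).const_add 1) hx).congr_deriv ?_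
  simp only [id_eq]
  ring

lemma monotoneOn_div_one_add : MonotoneOn (fun x : ℝ => x / (1 + x)) (Set.Ioi 0) := by
  intro x (hx : 0 < x) y (hy : 0 < y) hxy
  simp only
  rw [div_le_div_iff₀ (by positivity) (by positivity)]
  linarith

lemma inv_ofReal_cpow {x : ℝ} (hx : 0 ≤ x) (w : ℂ) : (x : ℂ)⁻¹ ^ w = (x : ℂ) ^ (-w) := by
  have harg : (x : ℂ).arg ≠ Real.pi := by
    rw [Complex.arg_ofReal_of_nonneg hx]
    exact Real.pi_pos.ne
  rw [Complex.inv_cpow _ _ harg, Complex.cpow_neg]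

lemma mellin_one_add_cpow_neg_add (s t : ℂ) :
    mellin (fun x : ℝ => (1 + x : ℂ) ^ (-(s + t))) s = Complex.betaIntegral s t := by
  have hderiv : ∀ x ∈ Set.Ioi (0 : ℝ),
      HasDerivWithinAt (fun x : ℝ => x / (1 + x)) ((1 + x) ^ 2)⁻¹ (Set.Ioi 0) x :=
    fun x (hx : 0 < x) => (hasDerivAt_div_one_add (by positivity)).hasDerivWithinAt
  rw [Complex.betaIntegral, intervalIntegral.integral_of_le zero_le_one,
    integral_Ioc_eq_integral_Ioo, ← image_div_one_add_Ioi_zero,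
    integral_image_eq_integral_deriv_smul_of_monotoneOn measurableSet_Ioi hderiv
      monotoneOn_div_one_add, mellin]
  refine setIntegral_congr_fun measurableSet_Ioi fun x (hx : 0 < x) => ?_
  have hx' : 0 < 1 + x := by positivity
  have hxC : (1 + x : ℂ) ≠ 0 := mod_cast hx'.ne'
  have hcompl : (1 : ℂ) - ((x / (1 + x) : ℝ) : ℂ) = (1 + x : ℂ)⁻¹ := by
    push_cast
    field_simp
    ring
  have hinv (w : ℂ) : ((1 + x : ℂ)⁻¹) ^ w = (1 + x : ℂ) ^ (-w) := by
    exact_mod_cast inv_ofReal_cpow hx'.le w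
  have hpow : ((x / (1 + x) : ℝ) : ℂ) ^ (s - 1) = (x : ℂ) ^ (s - 1) * (1 + x : ℂ) ^ (-(s - 1)) := by
    rw [div_eq_mul_inv, Complex.ofReal_mul,
      Complex.mul_cpow_ofReal_nonneg hx.le (inv_nonneg.2 hx'.le), ← hinv]
    push_cast
    rfl
  have hexp : -(s + t) = -2 + -(s - 1) + -(t - 1) := by ring
  simp only [smul_eq_mul, Complex.real_smul]
  rw [hcompl, hinv, hpow, hexp, Complex.cpow_add _ _ hxC, Complex.cpow_add _ _ hxC,
    Complex.cpow_neg _ 2]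
  push_cast
  rw [Complex.cpow_ofNat]
  ring

lemma mellin_inv_one_add {s : ℂ} (hs : s.re ∈ Set.Ioo 0 1) :
    mellin (fun x : ℝ => (1 + x : ℂ)⁻¹) s = Real.pi / Complex.sin (Real.pi * s) := by
  have hB := mellin_one_add_cpow_neg_add s (1 - s)
  have hΓ := Complex.Gamma_mul_Gamma_eq_betaIntegral (s := s) (t := 1 - s) hs.1
    (by simpa using hs.2)
  simp only [add_sub_cancel, Complex.cpow_neg_one] at hB hΓ
  rw [hB, ← Complex.Gamma_mul_Gamma_one_sub, hΓ, Complex.Gamma_one, one_mul]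

lemma mellin_inv_one_add_sq {s : ℂ} (hs : s.re ∈ Set.Ioo 0 2) :
    mellin (fun x : ℝ => (1 + (x : ℂ) ^ 2)⁻¹) s =
      Real.pi / (2 * Complex.sin (Real.pi * s / 2)) := by
  have h := mellin_comp_rpow (fun x : ℝ => (1 + x : ℂ)⁻¹) s 2
  have hs2 : (s / (2 : ℝ)).re ∈ Set.Ioo 0 1 := by
    rw [Complex.div_ofReal_re]
    constructor <;> linarith [hs.1, hs.2]
  rw [mellin_inv_one_add hs2] at h
  simp only [Real.rpow_two, Complex.ofReal_pow, Complex.ofReal_ofNat] at h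
  rw [h, Complex.real_smul, abs_of_pos two_pos]
  push_cast
  rw [mul_div_assoc]
  ring

lemma mellin_div_one_add_sq {s : ℂ} (hs : s.re ∈ Set.Ioo (-1) 1) :
    mellin (fun x : ℝ => (x : ℂ) / (1 + (x : ℂ) ^ 2)) s =
      Real.pi / (2 * Complex.cos (Real.pi * s / 2)) := by
  have hs' : (s + 1).re ∈ Set.Ioo 0 2 := by
    rw [Complex.add_re, Complex.one_re]
    constructor <;> linarith [hs.1, hs.2]
  have h := mellin_cpow_smul (fun x : ℝ => (1 + (x : ℂ) ^ 2)⁻¹) s 1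
  rw [mellin_inv_one_add_sq hs', sin_pi_mul_add_one_div_two] at h
  simpa only [Complex.cpow_one, smul_eq_mul, div_eq_mul_inv] using h

/- At `q = 0` both sides are `0` by convention: the integral diverges, and `0 ^ (s - 1) = 0`. -/
lemma mellin_div_sq_add_sq {s : ℂ} (hs : s.re ∈ Set.Ioo (-1) 1) (q : ℝ) :
    mellin (fun x : ℝ => (x : ℂ) / ((x : ℂ) ^ 2 + (q : ℂ) ^ 2)) s =
      Real.pi / (2 * Complex.cos (Real.pi * s / 2)) * ((|q| : ℝ) : ℂ) ^ (s - 1) := by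
  rcases eq_or_ne q 0 with rfl | hq
  · have hs1 : s - 1 ≠ 0 := fun h => by simpa [sub_eq_zero.1 h] using hs.2
    have hfun (x : ℝ) : (x : ℂ) / ((x : ℂ) ^ 2 + ((0 : ℝ) : ℂ) ^ 2) = (x : ℂ) ^ (-1 : ℂ) := by
      rw [Complex.cpow_neg_one]
      rcases eq_or_ne (x : ℂ) 0 with hx | hx
      · simp [hx]
      · simp [field]
    simp_rw [hfun, abs_zero, Complex.ofReal_zero, Complex.zero_cpow hs1, mul_zero]
    have h := mellin_cpow_smul (fun _ : ℝ => (1 : ℂ)) s (-1)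
    simp only [smul_eq_mul, mul_one] at h
    rw [h, mellin]
    simpa using setIntegral_Ioi_zero_cpow (s + -1 - 1)
  · have hq' : 0 < |q| := abs_pos.2 hq
    have hqC : ((|q| : ℝ) : ℂ) ≠ 0 := mod_cast hq'.ne'
    have hscale := mellin_comp_mul_left (fun x : ℝ => (x : ℂ) / (1 + (x : ℂ) ^ 2)) s
      (inv_pos.2 hq')
    have hfun (x : ℝ) : (x : ℂ) / ((x : ℂ) ^ 2 + (q : ℂ) ^ 2) =
        ((|q| : ℝ) : ℂ)⁻¹ • (((|q|⁻¹ * x : ℝ) : ℂ) / (1 + ((|q|⁻¹ * x : ℝ) : ℂ) ^ 2)) := by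
      rw [← Complex.ofReal_pow q, ← sq_abs q]
      push_cast
      rw [smul_eq_mul]
      field_simp
      ring
    simp_rw [hfun]
    rw [mellin_const_smul, hscale, mellin_div_one_add_sq hs, smul_eq_mul, smul_eq_mul,
      Complex.ofReal_inv, inv_ofReal_cpow hq'.le, neg_neg, Complex.cpow_sub _ _ hqC,
      Complex.cpow_one]
    ring

end MellinTransform

section InverseTrigonometricPolynomial

lemma sq_csqrt (z : ℂ) : z.sqrt ^ 2 = z :=
  Complex.cpow_ofNat_inv_pow z 2

lemma abs_im_csqrt_lt_re_csqrt {z : ℂ} (hz : 0 < z.re) : |z.sqrt.im| < z.sqrt.re := by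
  rw [Complex.sqrt, Complex.abs_cpow_inv_two_im, Complex.cpow_inv_two_re]
  have := Complex.re_le_norm z
  exact Real.sqrt_lt_sqrt (by linarith) (by linarith)

lemma csqrt_mul {z w : ℂ} (hz : 0 < z.re) (hw : 0 < w.re) :
    (z * w).sqrt = z.sqrt * w.sqrt := by
  have hz' := abs_lt.1 (abs_im_csqrt_lt_re_csqrt hz)
  have hw' := abs_lt.1 (abs_im_csqrt_lt_re_csqrt hw)
  have hre : 0 < (z.sqrt * w.sqrt).re := by
    rw [Complex.mul_re]
    nlinarith
  conv_lhs => rw [← sq_csqrt z, ← sq_csqrt w, ← mul_pow]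
  rw [Complex.sqrt, Complex.sq_cpow_two_inv hre]

lemma norm_csqrt_sub_lt_norm_csqrt_add {z w : ℂ} (hz : 0 < z.re) (hw : 0 < w.re) :
    ‖z.sqrt - w.sqrt‖ < ‖z.sqrt + w.sqrt‖ := by
  have hz' := abs_lt.1 (abs_im_csqrt_lt_re_csqrt hz)
  have hw' := abs_lt.1 (abs_im_csqrt_lt_re_csqrt hw)
  rw [← sq_lt_sq₀ (norm_nonneg _) (norm_nonneg _), ← Complex.normSq_eq_norm_sq,
    ← Complex.normSq_eq_norm_sq, Complex.normSq_apply, Complex.normSq_apply]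
  simp only [Complex.sub_re, Complex.sub_im, Complex.add_re, Complex.add_im]
  nlinarith

lemma sub_I_mul_mul_ne_zero {m n ζ : ℂ} (h : ‖n‖ < ‖m‖) (hζ : ‖ζ‖ ≤ 1) :
    m - Complex.I * n * ζ ≠ 0 := by
  intro h0
  have : ‖m‖ = ‖n‖ * ‖ζ‖ := by
    rw [sub_eq_zero.1 h0, norm_mul, norm_mul, Complex.norm_I, one_mul]
  nlinarith [norm_nonneg n]

/- With `ζ = exp (i φ)`, this is `m² + n² + 2 m n sin φ = (m - i n ζ) (m ζ + i n) / ζ`, written as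
the kernel in the mean value formula at the point `-(i n / m)` of the unit disc. -/
lemma inv_sq_add_sq_add_mul_sin {m : ℂ} (hm : m ≠ 0) (n : ℂ) (φ : ℝ) :
    (m ^ 2 + n ^ 2 + 2 * m * n * Complex.sin φ)⁻¹ =
      ((circleMap 0 1 φ - 0) / (circleMap 0 1 φ - -(Complex.I * n / m))) •
        (m * (m - Complex.I * n * circleMap 0 1 φ))⁻¹ := by
  have hexp : circleMap 0 1 φ = Complex.exp (φ * Complex.I) := by simp [circleMap]
  have hsin : 2 * Complex.sin (φ : ℂ) =
      ((circleMap 0 1 φ)⁻¹ - circleMap 0 1 φ) * Complex.I := by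
    rw [hexp, Complex.two_sin, ← Complex.exp_neg, neg_mul]
  have hζ : circleMap 0 1 φ ≠ 0 := circleMap_ne_center one_ne_zero
  set ζ := circleMap 0 1 φ
  rw [sub_zero, smul_eq_mul, div_mul_eq_mul_div, ← div_eq_mul_inv, div_div, ← inv_div]
  congr 1
  field_simp
  linear_combination m * n * ζ * hsin + m * n * Complex.I * mul_inv_cancel₀ hζ +
    n ^ 2 * ζ * Complex.I_sq

lemma integral_inv_sq_add_sq_add_mul_sin {m n : ℂ} (h : ‖n‖ < ‖m‖) :
    ∫ φ : ℝ in 0..2 * Real.pi, (m ^ 2 + n ^ 2 + 2 * m * n * Complex.sin φ)⁻¹ =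
      2 * Real.pi / (m ^ 2 - n ^ 2) := by
  have hm : m ≠ 0 := norm_pos_iff.1 ((norm_nonneg n).trans_lt h)
  have hdiff : DiffContOnCl ℂ (fun ζ => (m * (m - Complex.I * n * ζ))⁻¹)
      (Metric.ball 0 |1|) := by
    refine (DifferentiableOn.mono (t := Metric.closedBall 0 1) (fun ζ hζ => ?_) ?_).diffContOnCl
    · have := sub_I_mul_mul_ne_zero h (mem_closedBall_zero_iff.1 hζ)
      fun_prop (disch := exact mul_ne_zero hm this)
    · rw [abs_one]
      exact Metric.closure_ball_subset_closedBall
  have hmem : -(Complex.I * n / m) ∈ Metric.ball (0 : ℂ) |1| := by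
    simpa [div_lt_one (norm_pos_iff.2 hm)] using h
  have hval : m * (m - Complex.I * n * -(Complex.I * n / m)) = m ^ 2 - n ^ 2 := by
    field_simp
    linear_combination n ^ 2 * Complex.I_sq
  have hmean := hdiff.circleAverage_smul_div hmem
  simp_rw [Real.circleAverage_def, ← inv_sq_add_sq_add_mul_sin hm n, hval] at hmean
  rw [inv_smul_eq_iff₀ Real.two_pi_pos.ne', Complex.real_smul] at hmean
  rw [hmean]
  push_cast
  rfl

lemma integral_inv_add_mul_sin {A B : ℂ} (hadd : 0 < (A + B).re) (hsub : 0 < (A - B).re) :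
    ∫ φ : ℝ in 0..2 * Real.pi, (A + B * Complex.sin φ)⁻¹ =
      2 * Real.pi / (A ^ 2 - B ^ 2).sqrt := by
  set p := (A + B).sqrt
  set q := (A - B).sqrt
  have hA : A = ((p + q) / 2) ^ 2 + ((p - q) / 2) ^ 2 := by
    linear_combination -(sq_csqrt (A + B) + sq_csqrt (A - B)) / 2
  have hB : B = 2 * ((p + q) / 2) * ((p - q) / 2) := by
    linear_combination -(sq_csqrt (A + B) - sq_csqrt (A - B)) / 2
  have hsqrt : (A ^ 2 - B ^ 2).sqrt = ((p + q) / 2) ^ 2 - ((p - q) / 2) ^ 2 := by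
    rw [sq_sub_sq, csqrt_mul hadd hsub]
    ring
  have hnorm : ‖(p - q) / 2‖ < ‖(p + q) / 2‖ := by
    rw [norm_div, norm_div]
    exact div_lt_div_of_pos_right (norm_csqrt_sub_lt_norm_csqrt_add hadd hsub) (by simp)
  rw [hsqrt, ← integral_inv_sq_add_sq_add_mul_sin hnorm, ← hA, ← hB]

end InverseTrigonometricPolynomial

section PoissonIntegral

variable {Ω : Type*} [MeasurableSpace Ω] {μ : Measure Ω} {q : Ω → ℝ} {s : ℂ}

/-- `π` times the Poisson integral, at height `x` above the origin, of the law of `q` under `μ`. -/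
noncomputable def poissonIntegral (μ : Measure Ω) (q : Ω → ℝ) (x : ℝ) : ℝ :=
  ∫ ω, x / (x ^ 2 + q ω ^ 2) ∂μ

/-- The functional equation `P (1 / x) = x * P x` for the Poisson integral `P` of the law of `q`.
It makes the Mellin transform of `P` symmetric about `1 / 2`. -/
def IsPoissonSelfReciprocal (μ : Measure Ω) (q : Ω → ℝ) : Prop :=
  ∀ ⦃x : ℝ⦄, 0 < x → poissonIntegral μ q x⁻¹ = x * poissonIntegral μ q x

lemma div_sq_add_sq_le_inv {x : ℝ} (hx : 0 < x) (y : ℝ) : x / (x ^ 2 + y ^ 2) ≤ x⁻¹ := by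
  rw [inv_eq_one_div, div_le_div_iff₀ (by positivity) hx]
  nlinarith [sq_nonneg y]

lemma integrable_div_sq_add_sq [IsFiniteMeasure μ] (hq : AEMeasurable q μ) {x : ℝ} (hx : 0 < x) :
    Integrable (fun ω => x / (x ^ 2 + q ω ^ 2)) μ := by
  refine (integrable_const x⁻¹).mono' (AEMeasurable.aestronglyMeasurable (by fun_prop))
    (.of_forall fun ω => ?_)
  rw [Real.norm_of_nonneg (by positivity)]
  exact div_sq_add_sq_le_inv hx _

lemma poissonIntegral_nonneg {x : ℝ} (hx : 0 < x) : 0 ≤ poissonIntegral μ q x :=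
  integral_nonneg fun _ => by positivity

lemma poissonIntegral_le [IsFiniteMeasure μ] (hq : AEMeasurable q μ) {x : ℝ} (hx : 0 < x) :
    poissonIntegral μ q x ≤ μ.real Set.univ * x⁻¹ := by
  refine (integral_mono (integrable_div_sq_add_sq hq hx) (integrable_const x⁻¹)
    fun ω => div_sq_add_sq_le_inv hx _).trans_eq ?_
  rw [integral_const, smul_eq_mul]

lemma aestronglyMeasurable_poissonIntegral [SFinite μ] (hq : AEMeasurable q μ) (ν : Measure ℝ)
    [SFinite ν] : AEStronglyMeasurable (poissonIntegral μ q) ν := by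
  have : AEMeasurable (fun z : ℝ × Ω => q z.2) (ν.prod μ) := hq.comp_snd
  have hkernel : AEMeasurable (fun z : ℝ × Ω => z.1 / (z.1 ^ 2 + q z.2 ^ 2)) (ν.prod μ) := by
    fun_prop
  exact hkernel.aestronglyMeasurable.integral_prod_right'

namespace IsPoissonSelfReciprocal

lemma poissonIntegral_le_measureReal_univ [IsFiniteMeasure μ] (h : IsPoissonSelfReciprocal μ q)
    (hq : AEMeasurable q μ) {x : ℝ} (hx : 0 < x) : poissonIntegral μ q x ≤ μ.real Set.univ := by
  have hle := poissonIntegral_le hq (inv_pos.2 hx)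
  rw [h hx, inv_inv, mul_comm] at hle
  exact le_of_mul_le_mul_right hle hx

lemma integrableOn_rpow_mul_poissonIntegral [IsFiniteMeasure μ] (h : IsPoissonSelfReciprocal μ q)
    (hq : AEMeasurable q μ) {σ : ℝ} (hσ : σ ∈ Set.Ioo 0 1) :
    IntegrableOn (fun x => x ^ (σ - 1) * poissonIntegral μ q x) (Set.Ioi 0) := by
  have hnorm {x : ℝ} (hx : 0 < x) : ‖poissonIntegral μ q x‖ = poissonIntegral μ q x :=
    Real.norm_of_nonneg (poissonIntegral_nonneg hx)
  refine mellin_convergent_of_isBigO_scalar (a := 1) (b := 0) ?_ ?_ hσ.2 ?_ hσ.1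
  · refine locallyIntegrableOn_of_locallyIntegrable_restrict <|
      (locallyIntegrable_const (μ.real Set.univ)).mono
        (aestronglyMeasurable_poissonIntegral hq _) ?_
    filter_upwards [ae_restrict_mem measurableSet_Ioi] with x hx
    rw [hnorm hx, Real.norm_of_nonneg measureReal_nonneg]
    exact h.poissonIntegral_le_measureReal_univ hq hx
  · refine .of_bound (μ.real Set.univ) ?_
    filter_upwards [Filter.eventually_gt_atTop 0] with x hx
    rw [hnorm hx, Real.rpow_neg_one, Real.norm_of_nonneg (by positivity)]
    exact poissonIntegral_le hq hx
  · refine .of_bound (μ.real Set.univ) ?_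
    filter_upwards [self_mem_nhdsWithin] with x hx
    simpa [hnorm hx] using h.poissonIntegral_le_measureReal_univ hq hx

lemma integrable_prod_cpow_mul_div_sq_add_sq [IsFiniteMeasure μ] (h : IsPoissonSelfReciprocal μ q)
    (hq : AEMeasurable q μ) (hs : s.re ∈ Set.Ioo 0 1) :
    Integrable (Function.uncurry fun ω (x : ℝ) =>
        (x : ℂ) ^ (s - 1) * ((x : ℂ) / ((x : ℂ) ^ 2 + (q ω : ℂ) ^ 2)))
      (μ.prod (volume.restrict (Set.Ioi 0))) := by
  have hmeas : AEStronglyMeasurable (Function.uncurry fun ω (x : ℝ) =>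
      (x : ℂ) ^ (s - 1) * ((x : ℂ) / ((x : ℂ) ^ 2 + (q ω : ℂ) ^ 2)))
      (μ.prod (volume.restrict (Set.Ioi 0))) := by
    have : AEMeasurable (fun z : Ω × ℝ => q z.1) (μ.prod (volume.restrict (Set.Ioi 0))) :=
      hq.comp_fst
    refine AEMeasurable.aestronglyMeasurable ?_
    unfold Function.uncurry
    fun_prop
  have hnorm {x : ℝ} (hx : 0 < x) (ω : Ω) :
      ‖(x : ℂ) ^ (s - 1) * ((x : ℂ) / ((x : ℂ) ^ 2 + (q ω : ℂ) ^ 2))‖ =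
        x ^ (s.re - 1) * (x / (x ^ 2 + q ω ^ 2)) := by
    rw [norm_mul, Complex.norm_cpow_eq_rpow_re_of_pos hx, Complex.sub_re, Complex.one_re]
    norm_cast
    rw [Real.norm_of_nonneg (by positivity)]
  refine (integrable_prod_iff' hmeas).2 ⟨?_, ?_⟩
  · filter_upwards [ae_restrict_mem measurableSet_Ioi] with x (hx : 0 < x)
    have hint := (integrable_div_sq_add_sq hq hx).ofReal (𝕜 := ℂ)
    push_cast at hint
    exact hint.const_mul ((x : ℂ) ^ (s - 1))
  · refine (h.integrableOn_rpow_mul_poissonIntegral hq hs).congr_fun (fun x hx => ?_)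
      measurableSet_Ioi
    simp only [Function.uncurry, hnorm hx, integral_const_mul, poissonIntegral]

lemma integrable_abs_cpow [IsFiniteMeasure μ] (h : IsPoissonSelfReciprocal μ q)
    (hq : AEMeasurable q μ) (hs : s.re ∈ Set.Ioo 0 1) :
    Integrable (fun ω => ((|q ω| : ℝ) : ℂ) ^ (s - 1)) μ := by
  have hfiber := (h.integrable_prod_cpow_mul_div_sq_add_sq hq hs).integral_prod_left
  have hmellin (ω : Ω) := mellin_div_sq_add_sq (Set.Ioo_subset_Ioo_left (by norm_num) hs) (q ω)
  simp only [mellin, smul_eq_mul] at hmellin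
  simp only [Function.uncurry, hmellin] at hfiber
  refine (integrable_const_mul_iff (IsUnit.mk0 _ ?_) _).1 hfiber
  have hcos := cos_pi_mul_div_two_ne_zero_of_re_mem_Ioo
    (Set.Ioo_subset_Ioo_left (by norm_num) hs)
  simp [hcos, Real.pi_ne_zero]

lemma mellin_poissonIntegral [IsFiniteMeasure μ] (h : IsPoissonSelfReciprocal μ q)
    (hq : AEMeasurable q μ) (hs : s.re ∈ Set.Ioo 0 1) :
    mellin (fun x => (poissonIntegral μ q x : ℂ)) s =
      Real.pi / (2 * Complex.cos (Real.pi * s / 2)) * ∫ ω, ((|q ω| : ℝ) : ℂ) ^ (s - 1) ∂μ := by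
  have hpoisson (x : ℝ) : (poissonIntegral μ q x : ℂ) =
      ∫ ω, (x : ℂ) / ((x : ℂ) ^ 2 + (q ω : ℂ) ^ 2) ∂μ := by
    rw [poissonIntegral, ← integral_complex_ofReal]
    push_cast
    rfl
  calc mellin (fun x => (poissonIntegral μ q x : ℂ)) s
    _ = ∫ x : ℝ in Set.Ioi 0, ∫ ω,
          (x : ℂ) ^ (s - 1) * ((x : ℂ) / ((x : ℂ) ^ 2 + (q ω : ℂ) ^ 2)) ∂μ := by
      simp only [mellin, smul_eq_mul, hpoisson, integral_const_mul]
    _ = ∫ ω, mellin (fun x : ℝ => (x : ℂ) / ((x : ℂ) ^ 2 + (q ω : ℂ) ^ 2)) s ∂μ :=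
      (integral_integral_swap (h.integrable_prod_cpow_mul_div_sq_add_sq hq hs)).symm
    _ = _ := by
      simp only [mellin_div_sq_add_sq (Set.Ioo_subset_Ioo_left (by norm_num) hs),
        integral_const_mul]

lemma mellin_poissonIntegral_one_sub (h : IsPoissonSelfReciprocal μ q) (s : ℂ) :
    mellin (fun x => (poissonIntegral μ q x : ℂ)) (1 - s) =
      mellin (fun x => (poissonIntegral μ q x : ℂ)) s := by
  have hinv := mellin_comp_inv (fun x => (poissonIntegral μ q x : ℂ)) (s - 1)
  have hshift := mellin_cpow_smul (fun x => (poissonIntegral μ q x : ℂ)) (s - 1) 1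
  rw [sub_add_cancel] at hshift
  rw [← neg_sub s 1, ← hinv, ← hshift]
  refine setIntegral_congr_fun measurableSet_Ioi fun x hx => ?_
  simp only [h hx, Complex.cpow_one, Complex.ofReal_mul, smul_eq_mul]

theorem sin_mul_integral_abs_cpow [IsFiniteMeasure μ] (h : IsPoissonSelfReciprocal μ q)
    (hq : AEMeasurable q μ) (hs : s.re ∈ Set.Ioo 0 1) :
    Complex.sin (Real.pi * s / 2) * ∫ ω, ((|q ω| : ℝ) : ℂ) ^ (s - 1) ∂μ =
      Complex.cos (Real.pi * s / 2) * ∫ ω, ((|q ω| : ℝ) : ℂ) ^ (-s) ∂μ := by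
  have hs' : (1 - s).re ∈ Set.Ioo 0 1 := re_one_sub_mem_Ioo hs
  have hcos := cos_pi_mul_div_two_ne_zero_of_re_mem_Ioo
    (Set.Ioo_subset_Ioo_left (by norm_num) hs)
  have hcos' := cos_pi_mul_div_two_ne_zero_of_re_mem_Ioo
    (Set.Ioo_subset_Ioo_left (by norm_num) hs')
  have hsymm := h.mellin_poissonIntegral_one_sub s
  have hpi : (Real.pi : ℂ) ≠ 0 := mod_cast Real.pi_ne_zero
  rw [h.mellin_poissonIntegral hq hs, h.mellin_poissonIntegral hq hs',
    sub_sub_cancel_left] at hsymm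
  rw [cos_pi_mul_one_sub_div_two] at hsymm hcos'
  field_simp at hsymm
  linear_combination -hsymm

end IsPoissonSelfReciprocal

end PoissonIntegral

section CircleForm

/-- The quadratic form `a (x² + y²) + 2 √(a² + 1) x y`, of determinant `-1`, at the point
`(cos θ, sin θ)` of the unit circle. -/
noncomputable def circleForm (a θ : ℝ) : ℝ :=
  a + Real.sqrt (a ^ 2 + 1) * Real.sin (2 * θ)

lemma continuous_circleForm (a : ℝ) : Continuous (circleForm a) := by
  unfold circleForm
  fun_prop

lemma re_inv_ofReal_sub_mul_I (x y : ℝ) :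
    ((x - y * Complex.I : ℂ)⁻¹).re = x / (x ^ 2 + y ^ 2) := by
  simp [Complex.inv_re, Complex.normSq_apply, sq]

lemma sub_mul_I_ne_zero {x : ℝ} (hx : 0 < x) (y : ℝ) : (x - y * Complex.I : ℂ) ≠ 0 :=
  fun h => hx.ne' (by simpa using congrArg Complex.re h)

lemma integral_inv_sub_circleForm_mul_I {x : ℝ} (hx : 0 < x) (a : ℝ) :
    ∫ θ in 0..Real.pi, (x - circleForm a θ * Complex.I : ℂ)⁻¹ =
      Real.pi / (1 + (x : ℂ) ^ 2 - 2 * a * x * Complex.I).sqrt := by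
  set b : ℝ := Real.sqrt (a ^ 2 + 1) with hb
  have hb2 : (b : ℂ) ^ 2 = a ^ 2 + 1 := mod_cast Real.sq_sqrt (by positivity)
  have hsin (θ : ℝ) : (x - circleForm a θ * Complex.I : ℂ) =
      (x - a * Complex.I) + -(b * Complex.I) * Complex.sin ((2 * θ : ℝ) : ℂ) := by
    rw [circleForm, ← hb]
    push_cast
    ring
  have hdisc : (x - a * Complex.I) ^ 2 - (-(b * Complex.I)) ^ 2 =
      1 + (x : ℂ) ^ 2 - 2 * a * x * Complex.I := by
    linear_combination (a ^ 2 - b ^ 2) * Complex.I_sq + hb2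
  simp_rw [hsin]
  rw [intervalIntegral.integral_comp_mul_left
      (fun φ : ℝ => ((x - a * Complex.I) + -(b * Complex.I) * Complex.sin φ)⁻¹) two_ne_zero,
    mul_zero, integral_inv_add_mul_sin (by simpa using hx) (by simpa using hx), hdisc,
    Complex.real_smul]
  push_cast
  ring

lemma poissonIntegral_circleForm {x : ℝ} (hx : 0 < x) (a : ℝ) :
    poissonIntegral (volume.restrict (Set.Ioc 0 Real.pi)) (circleForm a) x =
      (Real.pi / (1 + (x : ℂ) ^ 2 - 2 * a * x * Complex.I).sqrt : ℂ).re := by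
  have hcont : Continuous fun θ => (x - circleForm a θ * Complex.I : ℂ)⁻¹ :=
    have := continuous_circleForm a
    .inv₀ (by fun_prop) fun θ => sub_mul_I_ne_zero hx _
  have hre := Complex.reCLM.intervalIntegral_comp_comm
    (hcont.intervalIntegrable (μ := volume) 0 Real.pi)
  rw [integral_inv_sub_circleForm_mul_I hx] at hre
  simp only [Complex.reCLM_apply, re_inv_ofReal_sub_mul_I] at hre
  rw [poissonIntegral, ← intervalIntegral.integral_of_le Real.pi_pos.le, hre]

lemma isPoissonSelfReciprocal_circleForm (a : ℝ) :
    IsPoissonSelfReciprocal (volume.restrict (Set.Ioc 0 Real.pi)) (circleForm a) := by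
  intro x hx
  have hxC : (x : ℂ) ≠ 0 := mod_cast hx.ne'
  have hinv : (1 + ((x⁻¹ : ℝ) : ℂ) ^ 2 - 2 * a * (x⁻¹ : ℝ) * Complex.I) =
      ((x⁻¹ : ℝ) : ℂ) ^ 2 * (1 + (x : ℂ) ^ 2 - 2 * a * x * Complex.I) := by
    push_cast
    field_simp
    ring
  have hre : 0 < (1 + (x : ℂ) ^ 2 - 2 * a * x * Complex.I).re := by
    have : (1 + (x : ℂ) ^ 2 - 2 * a * x * Complex.I).re = 1 + x ^ 2 := by
      simp [← Complex.ofReal_pow]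
    rw [this]
    positivity
  have hre' : 0 < (((x⁻¹ : ℝ) : ℂ) ^ 2).re := by
    rw [← Complex.ofReal_pow, Complex.ofReal_re]
    positivity
  rw [poissonIntegral_circleForm hx, poissonIntegral_circleForm (inv_pos.2 hx), hinv,
    csqrt_mul hre' hre, Complex.sqrt, Complex.sq_cpow_two_inv (by simpa using hx),
    ← Complex.re_ofReal_mul]
  congr 1
  push_cast
  field_simp

lemma intervalIntegrable_abs_circleForm_cpow (a : ℝ) {s : ℂ} (hs : s.re ∈ Set.Ioo 0 1) :
    IntervalIntegrable (fun θ => ((|circleForm a θ| : ℝ) : ℂ) ^ (s - 1)) volume 0 Real.pi :=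
  (intervalIntegrable_iff_integrableOn_Ioc_of_le Real.pi_pos.le).2 <|
    (isPoissonSelfReciprocal_circleForm a).integrable_abs_cpow
      (continuous_circleForm a).aemeasurable hs

theorem sin_mul_integral_abs_circleForm_cpow (a : ℝ) {s : ℂ} (hs : s.re ∈ Set.Ioo 0 1) :
    Complex.sin (Real.pi * s / 2) *
        ∫ θ in 0..Real.pi, ((|circleForm a θ| : ℝ) : ℂ) ^ (s - 1) =
      Complex.cos (Real.pi * s / 2) *
        ∫ θ in 0..Real.pi, ((|circleForm a θ| : ℝ) : ℂ) ^ (-s) := by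
  simp only [intervalIntegral.integral_of_le Real.pi_pos.le]
  exact (isPoissonSelfReciprocal_circleForm a).sin_mul_integral_abs_cpow
    (continuous_circleForm a).aemeasurable hs

lemma add_sqrt_mul_sin_eq_mul_circleForm {r : ℝ} (hr : 0 < r) (u θ : ℝ) :
    u + Real.sqrt (u ^ 2 + r ^ 2) * Real.sin (2 * θ) = r * circleForm (u / r) θ := by
  have hsq : u ^ 2 + r ^ 2 = r ^ 2 * ((u / r) ^ 2 + 1) := by field_simp
  rw [hsq, Real.sqrt_mul (sq_nonneg r), Real.sqrt_sq hr.le, circleForm]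
  field_simp

lemma ofReal_cpow_div_two {t : ℝ} (ht : 0 < t) (w : ℂ) :
    (t : ℂ) ^ (w / 2) = ((Real.sqrt t : ℝ) : ℂ) ^ w := by
  have hsqrt : ((Real.sqrt t : ℝ) : ℂ) ≠ 0 := mod_cast (Real.sqrt_pos.2 ht).ne'
  conv_lhs => rw [← Real.mul_self_sqrt ht.le]
  rw [Complex.ofReal_mul, Complex.mul_cpow_ofReal_nonneg (Real.sqrt_nonneg t) (Real.sqrt_nonneg t),
    ← Complex.cpow_add _ _ hsqrt, add_halves]

lemma two_cpow_mul_cpow_neg_mul_cpow {t : ℝ} (ht : 0 < t) (w : ℂ) :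
    (2 : ℂ) ^ w * (t : ℂ) ^ (-(w / 2)) * ((Real.sqrt t / 2 : ℝ) : ℂ) ^ w = 1 := by
  have htC : (t : ℂ) ^ (w / 2) ≠ 0 := by simp [ht.ne']
  have hmul : (2 : ℂ) ^ w * ((Real.sqrt t / 2 : ℝ) : ℂ) ^ w = (t : ℂ) ^ (w / 2) := by
    rw [ofReal_cpow_div_two ht, ← Complex.ofReal_ofNat, ← Complex.mul_cpow_ofReal_nonneg
      zero_le_two (by positivity), ← Complex.ofReal_mul, mul_div_cancel₀ _ two_ne_zero]
  rw [mul_right_comm, hmul, Complex.cpow_neg, mul_inv_cancel₀ htC]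

lemma two_cpow_mul_cpow_mul_integral {t : ℝ} (ht : 0 < t) (u : ℝ) (w : ℂ) :
    (2 : ℂ) ^ w * (t : ℂ) ^ (-(w / 2)) *
        ∫ θ in 0..Real.pi,
          ((|u + Real.sqrt (u ^ 2 + t / 4) * Real.sin (2 * θ)| : ℝ) : ℂ) ^ w =
      ∫ θ in 0..Real.pi, ((|circleForm (u / (Real.sqrt t / 2)) θ| : ℝ) : ℂ) ^ w := by
  set r := Real.sqrt t / 2 with hr
  have hr0 : 0 < r := by positivity
  have hrt : t / 4 = r ^ 2 := by
    rw [hr, div_pow, Real.sq_sqrt ht.le]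
    norm_num
  have hscale (θ : ℝ) : ((|u + Real.sqrt (u ^ 2 + t / 4) * Real.sin (2 * θ)| : ℝ) : ℂ) ^ w =
      (r : ℂ) ^ w * ((|circleForm (u / r) θ| : ℝ) : ℂ) ^ w := by
    rw [hrt, add_sqrt_mul_sin_eq_mul_circleForm hr0, abs_mul, abs_of_pos hr0, Complex.ofReal_mul,
      Complex.mul_cpow_ofReal_nonneg hr0.le (abs_nonneg _)]
  simp_rw [hscale]
  rw [intervalIntegral.integral_const_mul, ← mul_assoc, two_cpow_mul_cpow_neg_mul_cpow ht, one_mul]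

end CircleForm

theorem stmt18 (a : ℝ) (s : ℂ) (h0 : 0 < s.re) (h1 : s.re < 1) :
    IntervalIntegrable
      (fun θ : ℝ => ((|a + Real.sqrt (a ^ 2 + 1) * Real.sin (2 * θ)| : ℝ) : ℂ) ^ (s - 1))
      volume 0 Real.pi ∧
    IntervalIntegrable
      (fun θ : ℝ => ((|a + Real.sqrt (a ^ 2 + 1) * Real.sin (2 * θ)| : ℝ) : ℂ) ^ (-s))
      volume 0 Real.pi ∧
    Complex.sin ((Real.pi : ℂ) * s / 2) *
        (∫ θ in (0:ℝ)..Real.pi,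
          ((|a + Real.sqrt (a ^ 2 + 1) * Real.sin (2 * θ)| : ℝ) : ℂ) ^ (s - 1))
      = Complex.cos ((Real.pi : ℂ) * s / 2) *
        (∫ θ in (0:ℝ)..Real.pi,
          ((|a + Real.sqrt (a ^ 2 + 1) * Real.sin (2 * θ)| : ℝ) : ℂ) ^ (-s)) ∧
    (∀ t u : ℝ, 0 < t →
      Complex.sin ((Real.pi : ℂ) * s / 2) * (2 : ℂ) ^ (s - 1) *
          ((t : ℝ) : ℂ) ^ (-((s - 1) / 2)) *
          (∫ θ in (0:ℝ)..Real.pi,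
            ((|u + Real.sqrt (u ^ 2 + t / 4) * Real.sin (2 * θ)| : ℝ) : ℂ) ^ (s - 1))
        = Complex.sin ((Real.pi : ℂ) * (1 - s) / 2) * (2 : ℂ) ^ ((1 - s) - 1) *
          ((t : ℝ) : ℂ) ^ (-(((1 - s) - 1) / 2)) *
          (∫ θ in (0:ℝ)..Real.pi,
            ((|u + Real.sqrt (u ^ 2 + t / 4) * Real.sin (2 * θ)| : ℝ) : ℂ) ^ ((1 - s) - 1))) := by
  have hs : s.re ∈ Set.Ioo 0 1 := ⟨h0, h1⟩
  have hexp : 1 - s - 1 = -s := sub_sub_cancel_left 1 s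
  have hsin : Complex.cos (Real.pi * s / 2) = Complex.sin (Real.pi * (1 - s) / 2) := by
    simpa only [sub_sub_cancel] using cos_pi_mul_one_sub_div_two (1 - s)
  refine ⟨intervalIntegrable_abs_circleForm_cpow a hs,
    hexp ▸ intervalIntegrable_abs_circleForm_cpow a (re_one_sub_mem_Ioo hs),
    sin_mul_integral_abs_circleForm_cpow a hs, fun t u ht => ?_⟩
  have hscale := two_cpow_mul_cpow_mul_integral ht u
  have hdual := sin_mul_integral_abs_circleForm_cpow (u / (Real.sqrt t / 2)) hs
  rw [hsin, ← hexp, ← hscale, ← hscale] at hdual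
  simpa only [mul_assoc] using hdual
end

section
/- Let f₁, f₂ : ℝ³ → ℂ be Schwartz functions and let s₁, s₂, w ∈ ℂ with Re(s₁) > 1, Re(s₂) > 1, Re(w) > 2, and fix a sign ± . Then ∫_{(0,∞)³×ℝ²} (μ²t²)^{s₁} (μ²s²)^{s₂} μ^{4w} f₁(ρ(g₁)·x_{±}) f₂(ρ(g₂)·x_{±}) du dv (dt/t³)(ds/s³)(dμ/μ) = 4^{−(w + s₂/2 + 1)} ∫_{D±} ∫₀^∞ ∫_ℝ x₁^{s₁−1} |x₂² − 4x₁x₃|^{w + s₂/2 − 1} τ^{2s₂} f₁(x₁,x₂,x₃) f₂( ρ(a_τ n_ν) · (½√|x₂²−4x₁x₃|) · x_{±} ) dν (dτ/τ³) dx₁dx₂dx₃, where g₁ = μ·[[t,0],[u/t,1/t]], g₂ = μ·[[s,0],[v/s,1/s]], a_τ n_ν = [[τ,0],[ν/τ,1/τ]], x₊ = (1,0,−1), x₋ = (1,0,1), D₊ = {x ∈ ℝ³ : x₁ > 0, x₂² − 4x₁x₃ > 0}, D₋ = {x ∈ ℝ³ : x₁ > 0, x₂² − 4x₁x₃ < 0},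 and ½√|x₂²−4x₁x₃| · x_{±} denotes scalar multiplication in ℝ³. -/
open MeasureTheory

noncomputable section

/-- Integration domain of the left-hand side: `μ, t, s ∈ (0,∞)`, `u, v ∈ ℝ`. -/
def LHSdom : Set Param :=
  Set.Ioi 0 ×ˢ Set.Ioi 0 ×ˢ Set.Ioi 0 ×ˢ (Set.univ : Set (ℝ × ℝ))

/-- Integration domain of the right-hand side: `x ∈ D_ε`, `τ ∈ (0,∞)`, `ν ∈ ℝ`. -/
def RHSdom (ε : ℝ) : Set ((ℝ × ℝ × ℝ) × ℝ × ℝ) :=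
  {x : ℝ × ℝ × ℝ | 0 < x.1 ∧ 0 < ε * (x.2.1 ^ 2 - 4 * x.1 * x.2.2)} ×ˢ
    Set.Ioi (0 : ℝ) ×ˢ (Set.univ : Set ℝ)

/-!
Write `x_ε = (1, 0, -ε)`. The group `B⁺` of lower-triangular matrices with positive diagonal acts
simply transitively on the forms with `x₁ > 0` in a fixed sign of the discriminant, so `(μ, t, u) ↦
ρ(g₁) · x_ε` parametrizes `D_ε`. Its Jacobian determinant is `-16 ε μ⁵ / t`, and the discriminant of
the image is `4 ε μ⁴`. Hence `μ² = ½ √|x₂² - 4 x₁ x₃|`, which is the scalar by which `ρ(g₂)` differs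
from the action of the unimodular matrix `a_τ n_ν`, and the theorem is the change of variables `x =
ρ(g₁) · x_ε` with `(τ, ν) = (s, v)` kept fixed.
-/

section ProductMeasures

/-- The exchange of the first two factors of a triple product; it moves the coordinate `u` past `s`
when the parameters of `g₁` are separated from those of `g₂`. -/
def prodLeftComm (α β γ : Type*) [MeasurableSpace α] [MeasurableSpace β] [MeasurableSpace γ] :
    α × β × γ ≃ᵐ β × α × γ :=
  MeasurableEquiv.prodAssoc.symm.trans
    ((MeasurableEquiv.prodComm.prodCongr (.refl γ)).trans MeasurableEquiv.prodAssoc)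

lemma volume_preserving_prodLeftComm {α β γ : Type*} [MeasureSpace α] [MeasureSpace β]
    [MeasureSpace γ] [SFinite (volume : Measure α)] [SFinite (volume : Measure β)]
    [SFinite (volume : Measure γ)] : MeasurePreserving (prodLeftComm α β γ) :=
  volume_preserving_prodAssoc.symm.trans
    ((Measure.measurePreserving_swap.prod (.id volume)).trans volume_preserving_prodAssoc)

variable {E F G : Type*} [NormedAddCommGroup E] [NormedSpace ℝ E] [FiniteDimensional ℝ E]
  [MeasurableSpace E] [BorelSpace E] [NormedAddCommGroup F] [NormedSpace ℝ F]
  [FiniteDimensional ℝ F] [MeasurableSpace F] [BorelSpace F] [NormedAddCommGroup G]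
  [NormedSpace ℝ G]

lemma setIntegral_image_prod_eq_setIntegral_abs_det_fderiv_smul (μ : Measure E)
    [μ.IsAddHaarMeasure] (ν : Measure F) [ν.IsAddHaarMeasure] {s : Set E} {t : Set F} {f : E → E}
    {f' : E → E →L[ℝ] E} (hs : MeasurableSet s) (ht : MeasurableSet t)
    (hf' : ∀ x ∈ s, HasFDerivWithinAt f (f' x) s x) (hf : s.InjOn f) (g : E × F → G) :
    ∫ q in (f '' s) ×ˢ t, g q ∂μ.prod ν =
      ∫ p in s ×ˢ t, |(f' p.1).det| • g (f p.1, p.2) ∂μ.prod ν := by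
  have hderiv : ∀ p ∈ s ×ˢ t, HasFDerivWithinAt (Prod.map f id)
      ((f' p.1).prodMap (.id ℝ F)) (s ×ˢ t) p := fun p hp ↦
    ((hf' p.1 hp.1).mono (Set.fst_image_prod_subset s t)).prodMap p (hasFDerivWithinAt_id p.2 _)
  have hdet (p : E × F) : ((f' p.1).prodMap (.id ℝ F)).det = (f' p.1).det := by
    simp only [ContinuousLinearMap.det, ContinuousLinearMap.coe_prodMap, LinearMap.det_prodMap,
      ContinuousLinearMap.coe_id, LinearMap.det_id, mul_one]
  have himage : (f '' s) ×ˢ t = Prod.map f id '' s ×ˢ t := by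
    rw [Set.prodMap_image_prod, Set.image_id]
  rw [himage, integral_image_eq_integral_abs_det_fderiv_smul _ (hs.prod ht) hderiv
    (hf.prodMap (Set.injOn_id t))]
  simp only [hdet, Prod.map, id]

end ProductMeasures

section ThreeProduct

variable (R : Type*) [CommRing R]

/-- The standard basis of `R × R × R`, the analogue of `Module.Basis.finTwoProd`, used to write
endomorphisms of the space of binary quadratic forms as matrices. -/
def finThreeProdBasis : Module.Basis (Fin 3) R (R × R × R) :=
  Module.Basis.ofEquivFun
    { toFun := fun x ↦ ![x.1, x.2.1, x.2.2]
      invFun := fun v ↦ (v 0, v 1, v 2)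
      map_add' := fun x y ↦ by simp
      map_smul' := fun c x ↦ by simp
      left_inv := fun _ ↦ rfl
      right_inv := fun v ↦ by ext i; fin_cases i <;> rfl }

variable {R}

lemma coe_finThreeProdBasis_repr (x : R × R × R) :
    ⇑((finThreeProdBasis R).repr x) = ![x.1, x.2.1, x.2.2] :=
  rfl

lemma toLin_finThreeProdBasis_apply (A : Matrix (Fin 3) (Fin 3) R) (x : R × R × R) :
    Matrix.toLin (finThreeProdBasis R) (finThreeProdBasis R) A x =
      (A 0 0 * x.1 + A 0 1 * x.2.1 + A 0 2 * x.2.2,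
        A 1 0 * x.1 + A 1 1 * x.2.1 + A 1 2 * x.2.2,
        A 2 0 * x.1 + A 2 1 * x.2.1 + A 2 2 * x.2.2) := by
  refine (finThreeProdBasis R).ext_elem fun i ↦ ?_
  rw [← LinearMap.toMatrix_mulVec_repr (finThreeProdBasis R) (finThreeProdBasis R),
    LinearMap.toMatrix_toLin, coe_finThreeProdBasis_repr, coe_finThreeProdBasis_repr]
  fin_cases i <;> simp [Matrix.mulVec, dotProduct, Fin.sum_univ_three]

end ThreeProduct

lemma discrim_rhoAct (a c d : ℝ) (x : ℝ × ℝ × ℝ) :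
    discrim (rhoAct a c d x).1 (rhoAct a c d x).2.1 (rhoAct a c d x).2.2 =
      (a * d) ^ 2 * discrim x.1 x.2.1 x.2.2 := by
  simp only [discrim, rhoAct]
  ring

lemma rhoAct_mul_left (r a c d : ℝ) (x : ℝ × ℝ × ℝ) :
    rhoAct (r * a) (r * c) (r * d) x = rhoAct a c d (r ^ 2 • x) := by
  simp only [rhoAct, Prod.smul_fst, Prod.smul_snd, smul_eq_mul, Prod.mk.injEq]
  refine ⟨?_, ?_, ?_⟩ <;> ring

/-- The orbit map `(μ, t, u) ↦ ρ(g₁) · x_ε`, in the polynomial form that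
`rhoAct_eq_orbitMap` identifies with the action for `t ≠ 0`. -/
def orbitMap (ε : ℝ) (p : ℝ × ℝ × ℝ) : ℝ × ℝ × ℝ :=
  (p.1 ^ 2 * p.2.1 ^ 2, 2 * p.1 ^ 2 * p.2.2, p.1 ^ 2 * (p.2.2 ^ 2 - ε) / p.2.1 ^ 2)

/-- The domain `(0, ∞)² × ℝ` of the coordinates `(μ, t, u)`. -/
def orbitDom : Set (ℝ × ℝ × ℝ) :=
  Set.Ioi 0 ×ˢ Set.Ioi 0 ×ˢ Set.univ

/-- The set `D_ε` of forms whose discriminant has the sign of `ε`. -/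
def formDom (ε : ℝ) : Set (ℝ × ℝ × ℝ) :=
  {x | 0 < x.1 ∧ 0 < ε * discrim x.1 x.2.1 x.2.2}

/-- The coordinates `(μ, t, u)` of a form in the orbit of `x_ε`, inverting `orbitMap ε`. -/
def orbitCoord (ε : ℝ) (x : ℝ × ℝ × ℝ) : ℝ × ℝ × ℝ :=
  let m := √√(discrim x.1 x.2.1 x.2.2 / (4 * ε))
  (m, √x.1 / m, x.2.1 / (2 * m ^ 2))

section OrbitMap

variable {ε : ℝ} {p : ℝ × ℝ × ℝ}

lemma rhoAct_eq_orbitMap (ε m u : ℝ) {t : ℝ} (ht : t ≠ 0) :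
    rhoAct (m * t) (m * u / t) (m / t) (1, 0, -ε) = orbitMap ε (m, t, u) := by
  simp only [rhoAct, orbitMap, Prod.mk.injEq]
  refine ⟨?_, ?_, ?_⟩ <;> field_simp <;> ring

lemma discrim_orbitMap (ε : ℝ) (ht : p.2.1 ≠ 0) :
    discrim (orbitMap ε p).1 (orbitMap ε p).2.1 (orbitMap ε p).2.2 = 4 * ε * p.1 ^ 4 := by
  rw [← rhoAct_eq_orbitMap ε p.1 p.2.2 ht, discrim_rhoAct, discrim]
  field_simp
  ring

lemma mapsTo_orbitMap (hε : ε ≠ 0) : Set.MapsTo (orbitMap ε) orbitDom (formDom ε) := by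
  rintro p ⟨hm, ht, -⟩
  rw [Set.mem_Ioi] at hm ht
  refine ⟨by simp only [orbitMap]; positivity, ?_⟩
  rw [discrim_orbitMap ε ht.ne', show ε * (4 * ε * p.1 ^ 4) = 4 * ε ^ 2 * p.1 ^ 4 by ring]
  positivity

lemma leftInvOn_orbitCoord (hε : ε ≠ 0) :
    Set.LeftInvOn (orbitCoord ε) (orbitMap ε) orbitDom := by
  rintro ⟨m, t, u⟩ ⟨hm, ht, -⟩
  rw [Set.mem_Ioi] at hm ht
  dsimp only at hm ht
  have hroot : √√(discrim (orbitMap ε (m, t, u)).1 (orbitMap ε (m, t, u)).2.1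
      (orbitMap ε (m, t, u)).2.2 / (4 * ε)) = m := by
    rw [discrim_orbitMap ε ht.ne', mul_div_cancel_left₀ _ (by positivity),
      show m ^ 4 = (m ^ 2) ^ 2 by ring, Real.sqrt_sq (by positivity), Real.sqrt_sq hm.le]
  have hsqrt : √(m ^ 2 * t ^ 2) = m * t := by rw [← mul_pow, Real.sqrt_sq (by positivity)]
  simp only [orbitCoord, hroot]
  simp only [orbitMap, hsqrt, Prod.mk.injEq, true_and]
  constructor <;> field_simp

lemma ne_zero_of_mem_formDom {x : ℝ × ℝ × ℝ} (hx : x ∈ formDom ε) : ε ≠ 0 :=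
  left_ne_zero_of_mul hx.2.ne'

lemma discrim_div_pos_of_mem_formDom {x : ℝ × ℝ × ℝ} (hx : x ∈ formDom ε) :
    0 < discrim x.1 x.2.1 x.2.2 / (4 * ε) := by
  have hε := ne_zero_of_mem_formDom hx
  have hdiscrim := hx.2
  rw [show discrim x.1 x.2.1 x.2.2 / (4 * ε) = ε * discrim x.1 x.2.1 x.2.2 / (4 * ε ^ 2) by
    field_simp]
  positivity

lemma mapsTo_orbitCoord : Set.MapsTo (orbitCoord ε) (formDom ε) orbitDom := by
  intro x hx
  have hdiscrim := discrim_div_pos_of_mem_formDom hx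
  have hx₁ := hx.1
  refine ⟨?_, ?_, trivial⟩ <;> simp only [orbitCoord, Set.mem_Ioi] <;> positivity

lemma rightInvOn_orbitCoord :
    Set.RightInvOn (orbitCoord ε) (orbitMap ε) (formDom ε) := by
  intro x hx
  have hdiscrim := discrim_div_pos_of_mem_formDom hx
  have hx₁ := hx.1
  have hε := ne_zero_of_mem_formDom hx
  obtain ⟨m, hm, hroot⟩ : ∃ m, 0 < m ∧ √√(discrim x.1 x.2.1 x.2.2 / (4 * ε)) = m :=
    ⟨_, by positivity, rfl⟩
  have hpow : m ^ 4 = discrim x.1 x.2.1 x.2.2 / (4 * ε) := by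
    rw [← hroot, show 4 = 2 * 2 from rfl, pow_mul, Real.sq_sqrt (by positivity),
      Real.sq_sqrt hdiscrim.le]
  rw [eq_div_iff (by positivity), discrim] at hpow
  refine Prod.ext ?_ (Prod.ext ?_ ?_) <;>
    simp only [orbitMap, orbitCoord, hroot, div_pow, Real.sq_sqrt hx₁.le] <;> field_simp
  linear_combination -hpow

lemma bijOn_orbitMap (hε : ε ≠ 0) : Set.BijOn (orbitMap ε) orbitDom (formDom ε) :=
  Set.InvOn.bijOn ⟨leftInvOn_orbitCoord hε, rightInvOn_orbitCoord⟩ (mapsTo_orbitMap hε)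
    mapsTo_orbitCoord

/-- The Jacobian matrix of `orbitMap ε` in the coordinates `(μ, t, u)`. -/
def orbitJacobian (ε : ℝ) (p : ℝ × ℝ × ℝ) : Matrix (Fin 3) (Fin 3) ℝ :=
  !![2 * p.1 * p.2.1 ^ 2, 2 * p.1 ^ 2 * p.2.1, 0;
    4 * p.1 * p.2.2, 0, 2 * p.1 ^ 2;
    2 * p.1 * (p.2.2 ^ 2 - ε) / p.2.1 ^ 2, -2 * p.1 ^ 2 * (p.2.2 ^ 2 - ε) / p.2.1 ^ 3,
      2 * p.1 ^ 2 * p.2.2 / p.2.1 ^ 2]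

/-- The derivative of `orbitMap ε` as a continuous linear map, for the change of variables. -/
def orbitDeriv (ε : ℝ) (p : ℝ × ℝ × ℝ) : (ℝ × ℝ × ℝ) →L[ℝ] (ℝ × ℝ × ℝ) :=
  LinearMap.toContinuousLinearMap
    (Matrix.toLin (finThreeProdBasis ℝ) (finThreeProdBasis ℝ) (orbitJacobian ε p))

lemma hasFDerivAt_orbitMap (ε : ℝ) (ht : p.2.1 ≠ 0) :
    HasFDerivAt (orbitMap ε) (orbitDeriv ε p) p := by
  have hμ : HasFDerivAt Prod.fst (.fst ℝ ℝ (ℝ × ℝ)) p := hasFDerivAt_fst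
  have htu : HasFDerivAt Prod.snd (.snd ℝ ℝ (ℝ × ℝ)) p := hasFDerivAt_snd
  have hinv := (hasDerivAt_inv (pow_ne_zero 2 ht)).comp_hasFDerivAt p (htu.fst.pow 2)
  have hderiv := ((hμ.pow 2).mul (htu.fst.pow 2)).prodMk
    ((((hμ.pow 2).const_mul 2).mul htu.snd).prodMk
      (((hμ.pow 2).mul ((htu.snd.pow 2).sub_const ε)).mul hinv))
  refine hderiv.congr_fderiv (ContinuousLinearMap.ext fun q ↦ ?_)
  simp only [orbitDeriv, orbitJacobian, LinearMap.coe_toContinuousLinearMap',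
    toLin_finThreeProdBasis_apply, Matrix.of_apply, Matrix.cons_val', Matrix.cons_val_fin_one,
    Matrix.cons_val, ContinuousLinearMap.prod_apply, ContinuousLinearMap.comp_apply,
    ContinuousLinearMap.coe_fst', ContinuousLinearMap.coe_snd', add_apply, smul_apply, neg_apply,
    Function.comp_apply, Pi.mul_apply, smul_eq_mul, nsmul_eq_mul, Nat.cast_ofNat,
    Nat.add_one_sub_one, pow_one, neg_smul, Prod.mk.injEq]
  refine ⟨?_, ?_, ?_⟩ <;> field_simp <;> ring

lemma det_orbitDeriv (ε : ℝ) (ht : p.2.1 ≠ 0) :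
    (orbitDeriv ε p).det = -16 * ε * p.1 ^ 5 / p.2.1 := by
  rw [ContinuousLinearMap.det, orbitDeriv, LinearMap.coe_toContinuousLinearMap, LinearMap.det_toLin,
    orbitJacobian, Matrix.det_fin_three]
  simp only [Matrix.of_apply, Matrix.cons_val', Matrix.cons_val_fin_one, Matrix.cons_val]
  field_simp
  ring

end OrbitMap

/-- The separation of the parameters `(μ, t, u)` of `g₁` from the parameters `(s, v)`, which the
change of variables leaves alone. -/
def splitParam : Param ≃ᵐ (ℝ × ℝ × ℝ) × ℝ × ℝ :=
  ((MeasurableEquiv.refl ℝ).prodCongr (((MeasurableEquiv.refl ℝ).prodCongr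
    (prodLeftComm ℝ ℝ ℝ)).trans MeasurableEquiv.prodAssoc.symm)).trans
      MeasurableEquiv.prodAssoc.symm

lemma volume_preserving_splitParam : MeasurePreserving splitParam :=
  ((MeasurePreserving.id volume).prod (((MeasurePreserving.id volume).prod
    volume_preserving_prodLeftComm).trans volume_preserving_prodAssoc.symm)).trans
      volume_preserving_prodAssoc.symm

lemma splitParam_preimage_orbitDom_prod :
    splitParam ⁻¹' (orbitDom ×ˢ Set.Ioi 0 ×ˢ Set.univ) = LHSdom := by
  ext ⟨m, t, s, u, v⟩
  change ((0 < m ∧ 0 < t ∧ True) ∧ 0 < s ∧ True) ↔ 0 < m ∧ 0 < t ∧ 0 < s ∧ True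
  tauto

lemma measurableSet_LHSdom : MeasurableSet LHSdom :=
  measurableSet_Ioi.prod (measurableSet_Ioi.prod (measurableSet_Ioi.prod .univ))

lemma setIntegral_RHSdom_eq_setIntegral_LHSdom {E : Type*} [NormedAddCommGroup E]
    [NormedSpace ℝ E] {ε : ℝ} (hε : ε ≠ 0) (g : (ℝ × ℝ × ℝ) × ℝ × ℝ → E) :
    ∫ q in RHSdom ε, g q = ∫ p in LHSdom, (16 * |ε| * p.1 ^ 5 / p.2.1) •
      g (orbitMap ε (p.1, p.2.1, p.2.2.2.1), p.2.2.1, p.2.2.2.2) := by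
  have : (volume : Measure (ℝ × ℝ)).IsAddHaarMeasure := Measure.prod.instIsAddHaarMeasure _ _
  have : (volume : Measure (ℝ × ℝ × ℝ)).IsAddHaarMeasure := Measure.prod.instIsAddHaarMeasure _ _
  have horbit : MeasurableSet orbitDom := measurableSet_Ioi.prod (measurableSet_Ioi.prod .univ)
  have himage : RHSdom ε = (orbitMap ε '' orbitDom) ×ˢ Set.Ioi (0 : ℝ) ×ˢ Set.univ := by
    rw [(bijOn_orbitMap hε).image_eq]
    rfl
  rw [himage, Measure.volume_eq_prod,
    setIntegral_image_prod_eq_setIntegral_abs_det_fderiv_smul volume volume horbit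
      (measurableSet_Ioi.prod .univ)
      (fun p hp ↦ (hasFDerivAt_orbitMap ε hp.2.1.ne').hasFDerivWithinAt) (bijOn_orbitMap hε).injOn,
    ← Measure.volume_eq_prod, ← splitParam_preimage_orbitDom_prod,
    ← volume_preserving_splitParam.setIntegral_preimage_emb splitParam.measurableEmbedding]
  refine setIntegral_congr_fun
    (splitParam.measurable (horbit.prod (measurableSet_Ioi.prod .univ))) ?_
  rintro ⟨m, t, s, u, v⟩ ⟨⟨hm : 0 < m, ht : 0 < t, -⟩, -⟩
  have hsplit : splitParam (m, t, s, u, v) = ((m, t, u), s, v) := rfl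
  simp only [hsplit]
  rw [det_orbitDeriv ε ht.ne', abs_div, abs_mul, abs_mul, abs_of_pos ht,
    abs_of_pos (pow_pos hm 5)]
  norm_num

section ComplexPowers

lemma ofReal_pow_cpow {x : ℝ} (hx : 0 ≤ x) (n : ℕ) (z : ℂ) :
    ((x ^ n : ℝ) : ℂ) ^ z = (x : ℂ) ^ (n * z) := by
  rw [Complex.ofReal_pow, Complex.cpow_nat_mul'] <;>
    simp [Complex.arg_ofReal_of_nonneg hx, Real.pi_pos, Real.pi_pos.le]

lemma ofReal_mul_cpow {x y : ℝ} (hx : 0 ≤ x) (hy : 0 ≤ y) (z : ℂ) :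
    ((x * y : ℝ) : ℂ) ^ z = (x : ℂ) ^ z * (y : ℂ) ^ z := by
  rw [Complex.ofReal_mul, Complex.mul_cpow_ofReal_nonneg hx hy]

lemma sq_mul_sq_cpow_mul_cpow {m s : ℝ} (hm : 0 < m) (hs : 0 < s) (s₂ w : ℂ) :
    ((m ^ 2 * s ^ 2 : ℝ) : ℂ) ^ s₂ * (m : ℂ) ^ (4 * w) =
      (4 : ℂ) ^ (-(w + s₂ / 2)) * ((4 * m ^ 4 : ℝ) : ℂ) ^ (w + s₂ / 2) * (s : ℂ) ^ (2 * s₂) := by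
  have hm₀ : (m : ℂ) ≠ 0 := Complex.ofReal_ne_zero.2 hm.ne'
  have h4 : (4 : ℂ) ≠ 0 := by norm_num
  have hfour : (4 : ℂ) ^ (-(w + s₂ / 2)) * (4 : ℂ) ^ (w + s₂ / 2) = 1 := by
    rw [← Complex.cpow_add _ _ h4, neg_add_cancel, Complex.cpow_zero]
  have hmu : (m : ℂ) ^ (2 * s₂) * (m : ℂ) ^ (4 * w) = (m : ℂ) ^ (4 * (w + s₂ / 2)) := by
    rw [← Complex.cpow_add _ _ hm₀]
    ring_nf
  rw [ofReal_mul_cpow (by positivity) (by positivity),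
    ofReal_mul_cpow (by positivity) (by positivity), ofReal_pow_cpow hm.le, ofReal_pow_cpow hs.le,
    ofReal_pow_cpow hm.le]
  push_cast
  linear_combination (s : ℂ) ^ (2 * s₂) * hmu -
    (m : ℂ) ^ (4 * (w + s₂ / 2)) * (s : ℂ) ^ (2 * s₂) * hfour

lemma weight_eq_jacobian_mul_weight {m t s : ℝ} (hm : 0 < m) (ht : 0 < t) (hs : 0 < s)
    (s₁ s₂ w : ℂ) :
    ((m ^ 2 * t ^ 2 : ℝ) : ℂ) ^ s₁ * ((m ^ 2 * s ^ 2 : ℝ) : ℂ) ^ s₂ * (m : ℂ) ^ (4 * w) *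
      (((t ^ 3 * s ^ 3 * m)⁻¹ : ℝ) : ℂ) =
    (4 : ℂ) ^ (-(w + s₂ / 2 + 1)) * ((16 * m ^ 5 / t : ℝ) : ℂ) *
      (((m ^ 2 * t ^ 2 : ℝ) : ℂ) ^ (s₁ - 1) * ((4 * m ^ 4 : ℝ) : ℂ) ^ (w + s₂ / 2 - 1) *
        (s : ℂ) ^ (2 * s₂) * (((s ^ 3)⁻¹ : ℝ) : ℂ)) := by
  have h4 : (4 : ℂ) ≠ 0 := by norm_num
  have hm₀ : (m : ℂ) ≠ 0 := Complex.ofReal_ne_zero.2 hm.ne'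
  have ht₀ : (t : ℂ) ≠ 0 := Complex.ofReal_ne_zero.2 ht.ne'
  have hs₀ : (s : ℂ) ≠ 0 := Complex.ofReal_ne_zero.2 hs.ne'
  have hmt : ((m ^ 2 * t ^ 2 : ℝ) : ℂ) ≠ 0 := Complex.ofReal_ne_zero.2 (by positivity)
  have hdisc : ((4 * m ^ 4 : ℝ) : ℂ) ≠ 0 := Complex.ofReal_ne_zero.2 (by positivity)
  rw [mul_assoc (_ ^ s₁), sq_mul_sq_cpow_mul_cpow hm hs, neg_add (_ + _),
    Complex.cpow_add _ _ h4, Complex.cpow_neg_one, Complex.cpow_sub _ _ hmt,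
    Complex.cpow_sub _ _ hdisc, Complex.cpow_one, Complex.cpow_one]
  push_cast
  field_simp
  ring

end ComplexPowers

theorem stmt19_general (f₁ f₂ : ℝ × ℝ × ℝ → ℂ) (s₁ s₂ w : ℂ) (ε : ℝ) (hε : ε = 1 ∨ ε = -1) :
    (∫ p in LHSdom,
        ((p.1 ^ 2 * p.2.1 ^ 2 : ℝ) : ℂ) ^ s₁ * ((p.1 ^ 2 * p.2.2.1 ^ 2 : ℝ) : ℂ) ^ s₂ *
          ((p.1 : ℝ) : ℂ) ^ (4 * w) *
          f₁ (rhoAct (p.1 * p.2.1) (p.1 * p.2.2.2.1 / p.2.1) (p.1 / p.2.1)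
                (1, 0, -ε)) *
          f₂ (rhoAct (p.1 * p.2.2.1) (p.1 * p.2.2.2.2 / p.2.2.1) (p.1 / p.2.2.1)
                (1, 0, -ε)) *
          (((p.2.1 ^ 3 * p.2.2.1 ^ 3 * p.1)⁻¹ : ℝ) : ℂ))
      = (4 : ℂ) ^ (-(w + s₂ / 2 + 1)) *
        ∫ q in RHSdom ε,
          ((q.1.1 : ℝ) : ℂ) ^ (s₁ - 1) *
            ((|q.1.2.1 ^ 2 - 4 * q.1.1 * q.1.2.2| : ℝ) : ℂ) ^ (w + s₂ / 2 - 1) *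
            ((q.2.1 : ℝ) : ℂ) ^ (2 * s₂) *
            f₁ q.1 *
            f₂ (rhoAct q.2.1 (q.2.2 / q.2.1) q.2.1⁻¹
                  ((Real.sqrt |q.1.2.1 ^ 2 - 4 * q.1.1 * q.1.2.2| / 2) •
                    ((1 : ℝ), (0 : ℝ), (-ε : ℝ)))) *
            (((q.2.1 ^ 3)⁻¹ : ℝ) : ℂ) := by
  have hε_abs : |ε| = 1 := by rcases hε with rfl | rfl <;> norm_num
  have hε_ne : ε ≠ 0 := by rcases hε with rfl | rfl <;> norm_num
  rw [setIntegral_RHSdom_eq_setIntegral_LHSdom hε_ne, ← integral_const_mul]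
  refine setIntegral_congr_fun measurableSet_LHSdom ?_
  rintro ⟨m, t, s, u, v⟩ ⟨hm : 0 < m, ht : 0 < t, hs : 0 < s, -⟩
  have hg₁ := rhoAct_eq_orbitMap ε m u ht.ne'
  have hg₂ : rhoAct (m * s) (m * v / s) (m / s) (1, 0, -ε) =
      rhoAct s (v / s) s⁻¹ (m ^ 2 • (1, 0, -ε)) := by
    rw [← rhoAct_mul_left, mul_div_assoc, div_eq_mul_inv m s]
  have hdiscrim : |(orbitMap ε (m, t, u)).2.1 ^ 2 -
      4 * (orbitMap ε (m, t, u)).1 * (orbitMap ε (m, t, u)).2.2| = 4 * m ^ 4 := by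
    rw [← discrim, discrim_orbitMap ε ht.ne', abs_mul, abs_mul, hε_abs, abs_of_pos (pow_pos hm 4)]
    norm_num
  have hscale : √(4 * m ^ 4) / 2 = m ^ 2 := by
    rw [show 4 * m ^ 4 = (2 * m ^ 2) ^ 2 by ring, Real.sqrt_sq (by positivity)]
    ring
  have hfst : (orbitMap ε (m, t, u)).1 = m ^ 2 * t ^ 2 := rfl
  simp only [hdiscrim, hscale, hg₁, hg₂, hε_abs, mul_one, Complex.real_smul]
  rw [hfst]
  linear_combination (f₁ (orbitMap ε (m, t, u)) *
    f₂ (rhoAct s (v / s) s⁻¹ (m ^ 2 • ((1 : ℝ), (0 : ℝ), (-ε : ℝ))))) *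
      weight_eq_jacobian_mul_weight hm ht hs s₁ s₂ w

theorem stmt19 (f₁ f₂ : SchwartzMap (ℝ × ℝ × ℝ) ℂ) (s₁ s₂ w : ℂ)
    (h1 : 1 < s₁.re) (h2 : 1 < s₂.re) (hw : 2 < w.re)
    (ε : ℝ) (hε : ε = 1 ∨ ε = -1) :
    (∫ p in LHSdom,
        ((p.1 ^ 2 * p.2.1 ^ 2 : ℝ) : ℂ) ^ s₁ * ((p.1 ^ 2 * p.2.2.1 ^ 2 : ℝ) : ℂ) ^ s₂ *
          ((p.1 : ℝ) : ℂ) ^ (4 * w) *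
          f₁ (rhoAct (p.1 * p.2.1) (p.1 * p.2.2.2.1 / p.2.1) (p.1 / p.2.1)
                (1, 0, -ε)) *
          f₂ (rhoAct (p.1 * p.2.2.1) (p.1 * p.2.2.2.2 / p.2.2.1) (p.1 / p.2.2.1)
                (1, 0, -ε)) *
          (((p.2.1 ^ 3 * p.2.2.1 ^ 3 * p.1)⁻¹ : ℝ) : ℂ))
      = (4 : ℂ) ^ (-(w + s₂ / 2 + 1)) *
        ∫ q in RHSdom ε,
          ((q.1.1 : ℝ) : ℂ) ^ (s₁ - 1) *
            ((|q.1.2.1 ^ 2 - 4 * q.1.1 * q.1.2.2| : ℝ) : ℂ) ^ (w + s₂ / 2 - 1) *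
            ((q.2.1 : ℝ) : ℂ) ^ (2 * s₂) *
            f₁ q.1 *
            f₂ (rhoAct q.2.1 (q.2.2 / q.2.1) q.2.1⁻¹
                  ((Real.sqrt |q.1.2.1 ^ 2 - 4 * q.1.1 * q.1.2.2| / 2) •
                    ((1 : ℝ), (0 : ℝ), (-ε : ℝ)))) *
            (((q.2.1 ^ 3)⁻¹ : ℝ) : ℂ) :=
  stmt19_general f₁ f₂ s₁ s₂ w ε hε
end
end
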